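/- Let k, m, n be positive integers with k+m ≤ n. For all w, w′ ∈ Sₙ, the structure constant c^{w′}_{w, r[k,m]} equals 1 if w →_{r[k,m]} w′, and equals 0 otherwise. -/

import Mathlib

open Equiv MvPolynomial

attribute [local instance] Classical.propDecidable

namespace SchubertPieri

/-- Position `j ∈ {1,…,N}` (1-indexed) as an element of `Fin N` (0-indexed). -/
def pos (N : ℕ) [NeZero N] (j : ℕ) : Fin N :=
  ⟨(j - 1) % N, Nat.mod_lt _ (Nat.pos_of_ne_zero (NeZero.ne N))⟩

/-- The transposition `t_{a,b}` interchanging positions `a` and `b` (1-indexed). -/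
def t (N : ℕ) [NeZero N] (a b : ℕ) : Equiv.Perm (Fin N) :=
  Equiv.swap (pos N a) (pos N b)

/-- The value `w(j)` for `j ∈ {1,…,N}` (1-indexed). -/
def val {N : ℕ} [NeZero N] (w : Equiv.Perm (Fin N)) (j : ℕ) : ℕ :=
  (w (pos N j) : ℕ) + 1

/-- The length of `w`: its number of inversions. -/
def len {N : ℕ} (w : Equiv.Perm (Fin N)) : ℕ :=
  (Finset.univ.filter fun p : Fin N × Fin N => p.1 < p.2 ∧ w p.2 < w p.1).card

/-- The longest permutation `w₀ : j ↦ N+1-j`. -/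
def w0 (N : ℕ) : Equiv.Perm (Fin N) :=
  ⟨Fin.rev, Fin.rev, Fin.rev_rev, Fin.rev_rev⟩

/-- The product `t_{a 0, b 0} ⋯ t_{a (i-1), b (i-1)}`. -/
def tProd (N : ℕ) [NeZero N] (a b : ℕ → ℕ) (i : ℕ) : Equiv.Perm (Fin N) :=
  ((List.range i).map fun j => t N (a j) (b j)).prod

/-- `r[k,m] = t_{k,k+1} t_{k,k+2} ⋯ t_{k,k+m}`, the (m+1)-cycle with
`r[k,m](k) = k+m` and `r[k,m](j) = j-1` for `k+1 ≤ j ≤ k+m`. -/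
def rPerm (N k m : ℕ) [NeZero N] : Equiv.Perm (Fin N) :=
  ((List.range m).map fun i => t N k (k + 1 + i)).prod

/-- `c[k,m] = t_{k,k+1} t_{k-1,k+1} ⋯ t_{k-m+1,k+1}`, the (m+1)-cycle with
`c[k,m](j) = j+1` for `k-m+1 ≤ j ≤ k` and `c[k,m](k+1) = k-m+1`. -/
def cPerm (N k m : ℕ) [NeZero N] : Equiv.Perm (Fin N) :=
  ((List.range m).map fun i => t N (k - i) (k + 1)).prod

/-- The conditions that `aᵢ ≤ k < bᵢ` (with all indices in `{1,…,N}`) and that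
`ℓ(w t_{a₁ b₁} ⋯ t_{aᵢ bᵢ}) = ℓ(w) + i` for `1 ≤ i ≤ m`. -/
def StepOK (N k m : ℕ) [NeZero N] (w : Equiv.Perm (Fin N)) (a b : ℕ → ℕ) : Prop :=
  (∀ i, i < m → 1 ≤ a i ∧ a i ≤ k ∧ k < b i ∧ b i ≤ N) ∧
  (∀ i, i ≤ m → len (w * tProd N a b i) = len w + i)

/-- `w →_{r[k,m]} w'`. -/
def RelR (N k m : ℕ) [NeZero N] (w w' : Equiv.Perm (Fin N)) : Prop :=
  ∃ a b : ℕ → ℕ, StepOK N k m w a b ∧ w' = w * tProd N a b m ∧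
    (∀ i j, i < m → j < m → i ≠ j → b i ≠ b j)

/-- `w →_{c[k,m]} w'`. -/
def RelC (N k m : ℕ) [NeZero N] (w w' : Equiv.Perm (Fin N)) : Prop :=
  ∃ a b : ℕ → ℕ, StepOK N k m w a b ∧ w' = w * tProd N a b m ∧
    (∀ i j, i < m → j < m → i ≠ j → a i ≠ a j)

/-- The divided difference operator `∂ᵢ f = (f - sᵢ·f)/(xᵢ - xᵢ₊₁)` (1-indexed `i`);
the quotient is exact, and is recovered here as the (unique) witness of divisibility. -/
noncomputable def divDiff {N : ℕ} [NeZero N] (i : ℕ) (f : MvPolynomial (Fin N) ℤ) :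
    MvPolynomial (Fin N) ℤ :=
  if h : (X (pos N i) - X (pos N (i + 1))) ∣ (f - rename (⇑(t N i (i + 1))) f) then
    h.choose
  else 0

/-- `∂_{a₁} ∘ ⋯ ∘ ∂_{a_p}` applied to `f`, for a word `l = [a₁,…,a_p]`. -/
noncomputable def divDiffWord {N : ℕ} [NeZero N] (l : List ℕ) (f : MvPolynomial (Fin N) ℤ) :
    MvPolynomial (Fin N) ℤ :=
  l.foldr divDiff f

/-- Auxiliary: produce a reduced word for `w` by repeatedly removing a descent. -/
def redWordAux (N : ℕ) [NeZero N] : ℕ → Equiv.Perm (Fin N) → List ℕ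
  | 0, _ => []
  | fuel + 1, w =>
    match ((List.range (N - 1)).map (· + 1)).find? (fun i => decide (val w (i + 1) < val w i)) with
    | none => []
    | some i => redWordAux N fuel (w * t N i (i + 1)) ++ [i]

/-- A canonical reduced word `(a₁,…,a_p)` for `w`, i.e. `w = s_{a₁} ⋯ s_{a_p}` with `p = ℓ(w)`. -/
def redWord (N : ℕ) [NeZero N] (w : Equiv.Perm (Fin N)) : List ℕ :=
  redWordAux N (N * N) w

/-- The staircase monomial `x₁^{N-1} x₂^{N-2} ⋯ x_{N-1}`. -/
noncomputable def staircase (N : ℕ) : MvPolynomial (Fin N) ℤ :=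
  ∏ i : Fin N, X i ^ (N - 1 - (i : ℕ))

/-- The Schubert polynomial `𝔖_w = ∂_{w⁻¹w₀}(x₁^{N-1} ⋯ x_{N-1})`. -/
noncomputable def schubertPoly (N : ℕ) [NeZero N] (w : Equiv.Perm (Fin N)) :
    MvPolynomial (Fin N) ℤ :=
  divDiffWord (redWord N (w⁻¹ * w0 N)) (staircase N)

/-- The ideal of `Rₙ` generated by the symmetric polynomials with zero constant term. -/
noncomputable def symIdeal (N : ℕ) : Ideal (MvPolynomial (Fin N) ℤ) :=
  Ideal.span {f : MvPolynomial (Fin N) ℤ | f.IsSymmetric ∧ constantCoeff f = 0}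

/-- The ring `Hₙ = Rₙ/𝒮`. -/
abbrev HRing (N : ℕ) := MvPolynomial (Fin N) ℤ ⧸ symIdeal N

/-- The class of the Schubert polynomial `𝔖_w` in `Hₙ`. -/
noncomputable def SS (N : ℕ) [NeZero N] (w : Equiv.Perm (Fin N)) : HRing N :=
  Ideal.Quotient.mk (symIdeal N) (schubertPoly N w)

/-- The complete homogeneous symmetric polynomial of degree `m` in `x₁,…,x_k`. -/
noncomputable def hPoly (N k m : ℕ) : MvPolynomial (Fin N) ℤ :=
  ∑ s ∈ (Finset.univ.filter fun i : Fin N => (i : ℕ) < k).sym m,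
    (Multiset.map X (s : Multiset (Fin N))).prod

/-- The elementary symmetric polynomial of degree `m` in `x₁,…,x_k`. -/
noncomputable def ePoly (N k m : ℕ) : MvPolynomial (Fin N) ℤ :=
  ∑ s ∈ (Finset.univ.filter fun i : Fin N => (i : ℕ) < k).powersetCard m, ∏ i ∈ s, X i

/-- Covering relation of the `k`-Bruhat order. -/
def kCover (N k : ℕ) [NeZero N] (w w' : Equiv.Perm (Fin N)) : Prop :=
  ∃ a b : ℕ, 1 ≤ a ∧ a ≤ k ∧ k < b ∧ b ≤ N ∧ w' = w * t N a b ∧ len w' = len w + 1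

/-- The (strict) `k`-Bruhat order `<ₖ`. -/
def kBruhat (N k : ℕ) [NeZero N] : Equiv.Perm (Fin N) → Equiv.Perm (Fin N) → Prop :=
  Relation.TransGen (kCover N k)

/-- The label `w⁽ⁱ⁺¹⁾(a_{i+1})` (0-indexed `i`) of the `(i+1)`-st step of a path. -/
def label {N : ℕ} [NeZero N] (w : Equiv.Perm (Fin N)) (a b : ℕ → ℕ) (i : ℕ) : ℕ :=
  val (w * tProd N a b (i + 1)) (a i)

/-- `(a,b)` encodes a path of length `m` in the `k`-Bruhat order from `w` to `w'`
(normalized so that `a i = b i = 0` for `i ≥ m`, making the encoding unique). -/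
def PathWit (N k m : ℕ) [NeZero N] (w w' : Equiv.Perm (Fin N))
    (ab : (ℕ → ℕ) × (ℕ → ℕ)) : Prop :=
  StepOK N k m w ab.1 ab.2 ∧ w' = w * tProd N ab.1 ab.2 m ∧
    ∀ i, m ≤ i → ab.1 i = 0 ∧ ab.2 i = 0

/-- Paths of length `m` in the `k`-Bruhat order from `w` to `w'` with strictly
increasing labels. -/
def IncPaths (N k m : ℕ) [NeZero N] (w w' : Equiv.Perm (Fin N)) :
    Set ((ℕ → ℕ) × (ℕ → ℕ)) :=
  {ab | PathWit N k m w w' ab ∧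
    ∀ i j, i < j → j < m → label w ab.1 ab.2 i < label w ab.1 ab.2 j}

/-- Paths of length `m` in the `k`-Bruhat order from `w` to `w'` with strictly
decreasing labels. -/
def DecPaths (N k m : ℕ) [NeZero N] (w w' : Equiv.Perm (Fin N)) :
    Set ((ℕ → ℕ) × (ℕ → ℕ)) :=
  {ab | PathWit N k m w w' ab ∧
    ∀ i j, i < j → j < m → label w ab.1 ab.2 j < label w ab.1 ab.2 i}


/-- The cycle `(x₁ x₂ … x_r)` (sending `x₁ ↦ x₂ ↦ ⋯ ↦ x_r ↦ x₁`), as a product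
of transpositions. -/
def cycleList (N : ℕ) [NeZero N] (l : List ℕ) : Equiv.Perm (Fin N) :=
  ((l.zip l.tail).map fun p => t N p.1 p.2).prod

/-- The Grassmannian permutation `h[k;p,q]` of descent `k` and hook shape `(p,1^{q-1})`:
the `(p+q)`-cycle `(k-q+1  k-q+2 … k  k+p  k+p-1 … k+1)`. -/
def hookPerm (N k p q : ℕ) [NeZero N] : Equiv.Perm (Fin N) :=
  cycleList N (((List.range q).map fun i => k - q + 1 + i) ++
    ((List.range p).reverse.map fun i => k + 1 + i))

/-- `w|ₚ ∈ S_{N-1}`: delete row `p` and column `w(p)` from the permutation matrix of `w`. -/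
def drop {N : ℕ} (w : Equiv.Perm (Fin (N + 1))) (p : Fin (N + 1)) : Equiv.Perm (Fin N) :=
  Equiv.removeNone (((finSuccEquiv' p).symm.trans (w : Fin (N + 1) ≃ Fin (N + 1))).trans
    (finSuccEquiv' (w p)))

/-- `lam` is a partition with at most `k` parts (1-indexed parts `lam 1 ≥ lam 2 ≥ ⋯`,
normalized by `lam 0 = 0`). -/
def IsPartFun (k : ℕ) (lam : ℕ → ℕ) : Prop :=
  lam 0 = 0 ∧ (∀ j, 1 ≤ j → lam (j + 1) ≤ lam j) ∧ ∀ j, k < j → lam j = 0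

/-- `h_d(x₁,…,x_k)` for an integer `d`, with `h_d = 0` for `d < 0`. -/
noncomputable def hPolyZ (N k : ℕ) (d : ℤ) : MvPolynomial (Fin N) ℤ :=
  if 0 ≤ d then hPoly N k d.toNat else 0

/-- The Schur polynomial `s_λ(x₁,…,x_k)`, via the Jacobi–Trudi determinant
`det(h_{λᵢ+j-i})_{1 ≤ i,j ≤ k}`. -/
noncomputable def schurPoly (N k : ℕ) (lam : ℕ → ℕ) : MvPolynomial (Fin N) ℤ :=
  (Matrix.of fun i j : Fin k =>
    hPolyZ N k ((lam ((i : ℕ) + 1) : ℤ) + (j : ℕ) - (i : ℕ))).det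

/-- `r_j = #{i : aᵢ = j}` (with `i` ranging over `0,…,m-1`, 0-indexed). -/
def rJ (a : ℕ → ℕ) (m j : ℕ) : ℕ := ((Finset.range m).filter fun i => a i = j).card

/-- `μ_j = r_{j+1} + ⋯ + r_k`. -/
def muJ (a : ℕ → ℕ) (m k j : ℕ) : ℕ :=
  if j = 0 then 0 else ∑ j' ∈ Finset.Icc (j + 1) k, rJ a m j'

/-- `λ_j = μ_j + r_j`. -/
def lamJ (a : ℕ → ℕ) (m k j : ℕ) : ℕ :=
  if j = 0 then 0 else muJ a m k j + rJ a m j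

/-- `d_j = #{i : bᵢ = N+1-j}` (with `i` ranging over `0,…,m-1`, 0-indexed). -/
def dJ (b : ℕ → ℕ) (m N j : ℕ) : ℕ :=
  ((Finset.range m).filter fun i => b i = N + 1 - j).card

/-- `μ′_j = d_{j+1} + ⋯ + d_{N-k}`. -/
def muJ' (b : ℕ → ℕ) (m N k j : ℕ) : ℕ :=
  if j = 0 then 0 else ∑ j' ∈ Finset.Icc (j + 1) (N - k), dJ b m N j'

/-- `λ′_j = μ′_j + d_j`. -/
def lamJ' (b : ℕ → ℕ) (m N k j : ℕ) : ℕ :=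
  if j = 0 then 0 else muJ' b m N k j + dJ b m N j

/-- The conjugate (transpose) partition: `νᵗ_j = #{i : νᵢ ≥ j}`, for `ν` with at
most `k` parts. -/
def conjPart (k : ℕ) (nu : ℕ → ℕ) (j : ℕ) : ℕ :=
  if j = 0 then 0 else ((Finset.Icc 1 k).filter fun i => j ≤ nu i).card

/-- `wv` is the Grassmannian permutation of descent `k` and shape `nu`:
`wv(j) = j + ν_{k+1-j}` for `1 ≤ j ≤ k`, and `wv` is increasing on `{k+1,…,N}`. -/
def IsGrassOf (N k : ℕ) [NeZero N] (nu : ℕ → ℕ) (wv : Equiv.Perm (Fin N)) : Prop :=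
  (∀ j, 1 ≤ j → j ≤ k → val wv j = j + nu (k + 1 - j)) ∧
  (∀ j, k < j → j < N → val wv j < val wv (j + 1))

/-- Paths of length `m` in the `k`-Bruhat order from `w` to `w'` whose labels
increase strictly for the first `p` steps and decrease strictly thereafter
(positions `p, p+1, …, m` being decreasing, 1-indexed). -/
def IncDecPaths (N k m p : ℕ) [NeZero N] (w w' : Equiv.Perm (Fin N)) :
    Set ((ℕ → ℕ) × (ℕ → ℕ)) :=
  {ab | PathWit N k m w w' ab ∧
    (∀ i j, i < j → j < p → label w ab.1 ab.2 i < label w ab.1 ab.2 j) ∧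
    (∀ i j, p - 1 ≤ i → i < j → j < m → label w ab.1 ab.2 j < label w ab.1 ab.2 i)}

/-- Paths of length `m` in the `k`-Bruhat order from `w` to `w'` whose labels
decrease strictly for the first `q` steps and increase strictly thereafter. -/
def DecIncPaths (N k m q : ℕ) [NeZero N] (w w' : Equiv.Perm (Fin N)) :
    Set ((ℕ → ℕ) × (ℕ → ℕ)) :=
  {ab | PathWit N k m w w' ab ∧
    (∀ i j, i < j → j < q → label w ab.1 ab.2 j < label w ab.1 ab.2 i) ∧
    (∀ i j, q - 1 ≤ i → i < j → j < m → label w ab.1 ab.2 i < label w ab.1 ab.2 j)}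

/-!
The functionals `φ_u f = (∂_u f)(0)` kill the ideal of symmetric polynomials without constant term
and are dual to the Schubert classes, so they read off structure constants. By the Leibniz rule for
divided differences, multiplication by `x_k` acts on them as the Dunkl element
`θ_k = ∑_{b > k} [k b] - ∑_{a < k} [a k]`, where `[a b]` multiplies a permutation by `t_{a,b}` if
this changes the length by one and gives zero otherwise. The relations between the `[a b]` show that
the sums of products of `m` operators `[a b]` with `a ≤ k < b` and distinct `b`, taken in decreasing
order of `a`, satisfy in `(k, m)` the recursion of the complete homogeneous polynomials
`h_m(x₁, …, x_k)`; hence they are multiplication by a polynomial. The entries of this operator are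
the indicators of `w →_{r[k,m]} w'`, and for `w = 1` the only such `w'` is `r[k,m]`, so that
polynomial represents the class `𝔖_{r[k,m]}`.
-/

/-! ### Lengths and covers in the Bruhat order -/

section Length

variable {N : ℕ}

/-- The indicator of the inversion `(i, j)` of `w`. -/
noncomputable def inversionIndicator (w : Perm (Fin N)) (i j : Fin N) : ℕ :=
  if i < j ∧ w j < w i then 1 else 0

theorem len_eq_sum_inversionIndicator (w : Perm (Fin N)) :
    len w = ∑ i, ∑ j, inversionIndicator w i j := by
  unfold len inversionIndicator
  rw [Finset.card_filter, Fintype.sum_prod_type]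

theorem len_eq_of_pair {a b : Fin N} (hab : a ≠ b) (w : Perm (Fin N)) :
    len w =
      (inversionIndicator w a a + inversionIndicator w a b + inversionIndicator w b a +
        inversionIndicator w b b) +
      ∑ i ∈ {a, b}ᶜ, (inversionIndicator w a i + inversionIndicator w b i +
        inversionIndicator w i a + inversionIndicator w i b) +
      ∑ i ∈ {a, b}ᶜ, ∑ j ∈ {a, b}ᶜ, inversionIndicator w i j := by
  have split (f : Fin N → ℕ) : ∑ i, f i = f a + f b + ∑ i ∈ {a, b}ᶜ, f i := by
    rw [← Finset.sum_add_sum_compl {a, b} f, Finset.sum_pair hab]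
  rw [len_eq_sum_inversionIndicator, split]
  simp only [split (inversionIndicator w _), Finset.sum_add_distrib]
  ring

theorem inversionIndicator_mul_swap_outside (w : Perm (Fin N)) {a b i : Fin N} (hab : a < b)
    (hw : w a < w b) (hia : i ≠ a) (hib : i ≠ b) :
    inversionIndicator (w * swap a b) a i + inversionIndicator (w * swap a b) b i +
        inversionIndicator (w * swap a b) i a + inversionIndicator (w * swap a b) i b =
      inversionIndicator w a i + inversionIndicator w b i + inversionIndicator w i a +
        inversionIndicator w i b +
      2 * if i ∈ Set.Ioo a b ∧ w i ∈ Set.Ioo (w a) (w b) then 1 else 0 := by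
  have hwa : w i ≠ w a := w.injective.ne hia
  have hwb : w i ≠ w b := w.injective.ne hib
  simp only [inversionIndicator, Perm.mul_apply, swap_apply_of_ne_of_ne hia hib,
    swap_apply_left, swap_apply_right, Set.mem_Ioo]
  simp only [Fin.lt_def, ne_eq, Fin.ext_iff] at *
  split_ifs <;> omega

theorem len_mul_swap (w : Perm (Fin N)) {a b : Fin N} (hab : a < b) (hw : w a < w b) :
    len (w * swap a b) = len w + 1 +
      2 * Finset.card {i | i ∈ Set.Ioo a b ∧ w i ∈ Set.Ioo (w a) (w b)} := by
  have outside : ∀ i ∈ ({a, b}ᶜ : Finset (Fin N)), i ≠ a ∧ i ≠ b := by simp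
  have inner : ∑ i ∈ {a, b}ᶜ, ∑ j ∈ {a, b}ᶜ, inversionIndicator (w * swap a b) i j =
      ∑ i ∈ {a, b}ᶜ, ∑ j ∈ {a, b}ᶜ, inversionIndicator w i j := by
    refine Finset.sum_congr rfl fun i hi => Finset.sum_congr rfl fun j hj => ?_
    simp only [inversionIndicator, Perm.mul_apply,
      swap_apply_of_ne_of_ne (outside i hi).1 (outside i hi).2,
      swap_apply_of_ne_of_ne (outside j hj).1 (outside j hj).2]
  have count : Finset.card {i | i ∈ Set.Ioo a b ∧ w i ∈ Set.Ioo (w a) (w b)} =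
      ∑ i ∈ {a, b}ᶜ, if i ∈ Set.Ioo a b ∧ w i ∈ Set.Ioo (w a) (w b) then 1 else 0 := by
    rw [Finset.card_filter, ← Finset.sum_add_sum_compl {a, b}, Finset.sum_pair hab.ne]
    simp
  rw [len_eq_of_pair hab.ne, len_eq_of_pair hab.ne w, inner,
    Finset.sum_congr rfl fun i hi =>
      inversionIndicator_mul_swap_outside w hab hw (outside i hi).1 (outside i hi).2,
    Finset.sum_add_distrib, ← Finset.mul_sum, count]
  simp only [inversionIndicator, Perm.mul_apply, swap_apply_left, swap_apply_right,
    lt_self_iff_false, and_self, hab, hw, hab.not_gt, hw.not_gt, and_false, false_and, if_false,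
    if_true]
  ring

/-- For `a < b`: right multiplication of `w` by the transposition of `a` and `b` is an upward cover
in the Bruhat order, see `len_mul_swap_eq_add_one_iff`. -/
def IsBruhatCover (w : Perm (Fin N)) (a b : Fin N) : Prop :=
  w a < w b ∧ ∀ i ∈ Set.Ioo a b, w i ∉ Set.Ioo (w a) (w b)

theorem len_mul_swap_lt (w : Perm (Fin N)) {a b : Fin N} (hab : a < b) (hw : w b < w a) :
    len (w * swap a b) < len w := by
  have := len_mul_swap (w * swap a b) hab (by simpa using hw)
  rw [mul_swap_mul_self] at this
  lia

theorem len_mul_swap_eq_add_one_iff (w : Perm (Fin N)) {a b : Fin N} (hab : a < b) :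
    len (w * swap a b) = len w + 1 ↔ IsBruhatCover w a b := by
  rcases lt_or_gt_of_ne (w.injective.ne hab.ne) with h | h
  · rw [len_mul_swap w hab h]
    simp [IsBruhatCover, h, Finset.filter_eq_empty_iff]
  · have := len_mul_swap_lt w hab h
    exact iff_of_false (by lia) fun hc => hc.1.not_gt h

theorem len_mul_swap_add_one_eq_iff (w : Perm (Fin N)) {a b : Fin N} (hab : a < b) :
    len (w * swap a b) + 1 = len w ↔ IsBruhatCover (w * swap a b) a b := by
  rw [← len_mul_swap_eq_add_one_iff _ hab, mul_swap_mul_self, eq_comm]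

theorem len_mul_swap_of_ascent (w : Perm (Fin N)) {a b : Fin N} (hab : a ⋖ b) (h : w a < w b) :
    len (w * swap a b) = len w + 1 :=
  (len_mul_swap_eq_add_one_iff w hab.lt).2 ⟨h, fun _ hi => (hab.2 hi.1 hi.2).elim⟩

theorem len_mul_swap_of_descent (w : Perm (Fin N)) {a b : Fin N} (hab : a ⋖ b) (h : w b < w a) :
    len (w * swap a b) + 1 = len w := by
  simpa using (len_mul_swap_of_ascent (w * swap a b) hab (by simpa using h)).symm

theorem exists_descent {w : Perm (Fin N)} (h : w ≠ 1) : ∃ a b : Fin N, a ⋖ b ∧ w b < w a := by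
  contrapose! h
  have hmono : StrictMono w := by
    rcases N with _ | N
    · exact fun a => a.elim0
    · refine Fin.strictMono_iff_lt_succ.2 fun i => ?_
      have hi : i.castSucc ⋖ i.succ := by simp [Fin.covBy_iff]
      exact (h _ _ hi).lt_of_ne (w.injective.ne hi.ne)
  exact Equiv.ext fun i =>
    congrFun ((hmono.range_inj strictMono_id).1 (by simp [w.surjective.range_eq])) i

theorem len_one : len (1 : Perm (Fin N)) = 0 :=
  Finset.card_eq_zero.2 <| Finset.filter_eq_empty_iff.2 fun _ _ h => h.1.not_gt h.2

theorem descent_induction {P : Perm (Fin N) → Prop} (one : P 1)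
    (descent : ∀ (u : Perm (Fin N)) (a b : Fin N), a ⋖ b → u b < u a → P (u * swap a b) → P u)
    (u : Perm (Fin N)) : P u := by
  induction h : len u using Nat.strong_induction_on generalizing u with
  | _ l ih =>
    by_cases hu : u = 1
    · exact hu ▸ one
    · obtain ⟨a, b, hab, hd⟩ := exists_descent hu
      have := len_mul_swap_of_descent u hab hd
      exact descent u a b hab hd (ih _ (by lia) _ rfl)

theorem len_mul_swap_le (w : Perm (Fin N)) {a b : Fin N} (hab : a ⋖ b) :
    len (w * swap a b) ≤ len w + 1 := by
  rcases lt_or_gt_of_ne (w.injective.ne hab.ne) with h | h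
  · exact (len_mul_swap_of_ascent w hab h).le
  · have := len_mul_swap_of_descent w hab h
    lia

theorem len_mul_le (u v : Perm (Fin N)) : len (u * v) ≤ len u + len v := by
  induction v using descent_induction with
  | one => simp
  | descent v a b hab hd ih =>
    have := len_mul_swap_of_descent v hab hd
    have := len_mul_swap_le (u * (v * swap a b)) hab
    rw [← mul_assoc, mul_swap_mul_self] at this
    rw [← mul_assoc] at ih
    lia

theorem len_le_mul_self (w : Perm (Fin N)) : len w ≤ N * N :=
  (Finset.card_filter_le _ _).trans (by simp)

theorem len_inv (w : Perm (Fin N)) : len w⁻¹ = len w :=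
  Finset.card_bij' (fun p _ => (w⁻¹ p.2, w⁻¹ p.1)) (fun p _ => (w p.2, w p.1))
    (by simp +contextual) (by simp +contextual) (by simp) (by simp)

theorem len_mul_w0_eq_card (w : Perm (Fin N)) :
    len (w * w0 N) = Finset.card {p : Fin N × Fin N | p.1 < p.2 ∧ w p.1 < w p.2} :=
  Finset.card_bij' (fun p _ => (p.2.rev, p.1.rev)) (fun p _ => (p.2.rev, p.1.rev))
    (fun p hp => (Finset.mem_filter_univ _).2 (by simpa [w0] using (Finset.mem_filter_univ _).1 hp))
    (fun p hp => (Finset.mem_filter_univ _).2 (by simpa [w0] using (Finset.mem_filter_univ _).1 hp))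
    (by simp) (by simp)

theorem len_mul_w0_add_len (w : Perm (Fin N)) : len (w * w0 N) + len w = len (w0 N) := by
  have hw0 : len (w0 N) = Finset.card {p : Fin N × Fin N | p.1 < p.2} := by
    simpa using len_mul_w0_eq_card (1 : Perm (Fin N))
  rw [len_mul_w0_eq_card, hw0, len, ← Finset.card_union_of_disjoint]
  · congr 1
    ext ⟨i, j⟩
    have : i < j → w i < w j ∨ w j < w i := fun h => lt_or_gt_of_ne (w.injective.ne h.ne)
    simp only [Finset.mem_union, Finset.mem_filter_univ]
    tauto
  · exact Finset.disjoint_filter.2 fun _ _ h h' => h.2.not_gt h'.2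

end Length

/-! ### Divided differences -/

section Swap

variable {σ : Type*} [DecidableEq σ] {a b c d : σ}

theorem swap_mul_swap_comm (hab : a ≠ b) (hcd : c ≠ d) (hac : a ≠ c) (had : a ≠ d) (hbc : b ≠ c)
    (hbd : b ≠ d) : swap a b * swap c d = swap c d * swap a b :=
  (Perm.disjoint_swap_swap (by simp [hab, hcd, hac, had, hbc, hbd])).commute

theorem swap_braid (hab : a ≠ b) (hac : a ≠ c) (hbc : b ≠ c) :
    swap a b * swap b c * swap a b = swap b c * swap a b * swap b c := by
  rw [swap_mul_swap_mul_swap hab hac, swap_comm a b, swap_comm b c,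
    swap_mul_swap_mul_swap hbc.symm hac.symm, swap_comm]

theorem mul_swap_mul_swap_eq (u : Perm σ) (a b c d : σ) :
    u * swap c d * swap a b = u * swap a b * swap (swap a b c) (swap a b d) := by
  rw [mul_assoc, swap_mul_eq_mul_swap, ← mul_assoc, swap_inv]

end Swap

section DividedDifference

variable {σ R : Type*} [CommRing R]

theorem rename_perm_mul (τ υ : Perm σ) (f : MvPolynomial σ R) :
    rename ⇑(τ * υ) f = rename τ (rename υ f) := by
  rw [rename_rename, Perm.coe_mul]

theorem X_sub_X_ne_zero [IsDomain R] {a b : σ} (hab : a ≠ b) : (X a - X b : MvPolynomial σ R) ≠ 0 :=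
  sub_ne_zero.2 (X_injective.ne hab)

variable [DecidableEq σ]

theorem X_sub_X_dvd_sub_rename_swap (a b : σ) (f : MvPolynomial σ R) :
    X a - X b ∣ f - rename (swap a b) f := by
  set I : Ideal (MvPolynomial σ R) := Ideal.span {X a - X b} with hI
  have hmk : Ideal.Quotient.mkₐ R I = (Ideal.Quotient.mkₐ R I).comp (rename (swap a b)) := by
    refine algHom_ext fun i => ?_
    simp only [AlgHom.comp_apply, rename_X, Ideal.Quotient.mkₐ_eq_mk,
      Ideal.Quotient.mk_eq_mk_iff_sub_mem, hI, Ideal.mem_span_singleton]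
    rcases eq_or_ne i a with rfl | hia
    · rw [swap_apply_left]
    rcases eq_or_ne i b with rfl | hib
    · rw [swap_apply_right, dvd_sub_comm]
    · simp [swap_apply_of_ne_of_ne hia hib]
  exact Ideal.mem_span_singleton.1 (Ideal.Quotient.mk_eq_mk_iff_sub_mem _ _ |>.1
    (DFunLike.congr_fun hmk f))

/-- The divided difference `∂_{ab} f = (f - s_{ab} f) / (x_a - x_b)` for arbitrary indices, the
quotient being a chosen witness of divisibility; its value is arbitrary for `a = b`. -/
noncomputable def dividedDifference (a b : σ) (f : MvPolynomial σ R) : MvPolynomial σ R :=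
  (X_sub_X_dvd_sub_rename_swap a b f).choose

theorem X_sub_X_mul_dividedDifference (a b : σ) (f : MvPolynomial σ R) :
    (X a - X b) * dividedDifference a b f = f - rename (swap a b) f :=
  (X_sub_X_dvd_sub_rename_swap a b f).choose_spec.symm

theorem X_sub_X_mul_rename_dividedDifference (τ : Perm σ) (a b : σ) (f : MvPolynomial σ R) :
    (X (τ a) - X (τ b)) * rename τ (dividedDifference a b f) =
      rename τ f - rename (τ * swap a b) f := by
  rw [rename_perm_mul, ← map_sub, ← X_sub_X_mul_dividedDifference, map_mul, map_sub, rename_X,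
    rename_X]

variable [IsDomain R] {a b c d : σ}

theorem dividedDifference_eq (hab : a ≠ b) {f g : MvPolynomial σ R}
    (h : (X a - X b) * g = f - rename (swap a b) f) : dividedDifference a b f = g :=
  mul_left_cancel₀ (X_sub_X_ne_zero hab) (by rw [X_sub_X_mul_dividedDifference, h])

theorem dividedDifference_add (hab : a ≠ b) (f g : MvPolynomial σ R) :
    dividedDifference a b (f + g) = dividedDifference a b f + dividedDifference a b g :=
  dividedDifference_eq hab <| by
    rw [mul_add, X_sub_X_mul_dividedDifference, X_sub_X_mul_dividedDifference, map_add]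
    ring

theorem dividedDifference_symm (hab : a ≠ b) (f : MvPolynomial σ R) :
    dividedDifference b a f = -dividedDifference a b f :=
  dividedDifference_eq hab.symm <| by
    rw [swap_comm b a]
    linear_combination X_sub_X_mul_dividedDifference a b f

theorem dividedDifference_neg (hab : a ≠ b) (f : MvPolynomial σ R) :
    dividedDifference a b (-f) = -dividedDifference a b f :=
  dividedDifference_eq hab <| by
    rw [map_neg]
    linear_combination -X_sub_X_mul_dividedDifference a b f

theorem dividedDifference_mul_of_rename_eq (hab : a ≠ b) (f : MvPolynomial σ R)
    {g : MvPolynomial σ R} (hg : rename (swap a b) g = g) :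
    dividedDifference a b (g * f) = g * dividedDifference a b f :=
  dividedDifference_eq hab <| by
    rw [map_mul, hg]
    linear_combination g * X_sub_X_mul_dividedDifference a b f

theorem dividedDifference_one (hab : a ≠ b) :
    dividedDifference a b (1 : MvPolynomial σ R) = 0 :=
  dividedDifference_eq hab <| by simp

theorem dividedDifference_X_mul (hab : a ≠ b) (i : σ) (f : MvPolynomial σ R) :
    dividedDifference a b (X i * f) = X (swap a b i) * dividedDifference a b f +
      (if i = a then f else if i = b then -f else 0) :=
  dividedDifference_eq hab <| by
    have h := X_sub_X_mul_dividedDifference a b f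
    rw [map_mul, rename_X]
    split_ifs with hia hib
    · subst hia
      rw [swap_apply_left]
      linear_combination X b * h
    · subst hib
      rw [swap_apply_right]
      linear_combination X a * h
    · rw [swap_apply_of_ne_of_ne hia hib]
      linear_combination X i * h

theorem rename_swap_dividedDifference (hab : a ≠ b) (f : MvPolynomial σ R) :
    rename (swap a b) (dividedDifference a b f) = dividedDifference a b f := by
  refine (dividedDifference_eq hab ?_).symm
  have h := X_sub_X_mul_rename_dividedDifference (swap a b) a b f
  rw [swap_apply_left, swap_apply_right, swap_mul_self, Perm.coe_one, rename_id_apply] at h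
  linear_combination -h

theorem dividedDifference_dividedDifference (hab : a ≠ b) (f : MvPolynomial σ R) :
    dividedDifference a b (dividedDifference a b f) = 0 :=
  dividedDifference_eq hab <| by rw [rename_swap_dividedDifference hab, mul_zero, sub_self]

theorem dividedDifference_comm (hab : a ≠ b) (hcd : c ≠ d) (hac : a ≠ c) (had : a ≠ d)
    (hbc : b ≠ c) (hbd : b ≠ d) (f : MvPolynomial σ R) :
    dividedDifference a b (dividedDifference c d f) =
      dividedDifference c d (dividedDifference a b f) := by
  have h₁ := X_sub_X_mul_rename_dividedDifference (swap a b) c d f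
  have h₂ := X_sub_X_mul_rename_dividedDifference (swap c d) a b f
  rw [swap_apply_of_ne_of_ne hac.symm hbc.symm, swap_apply_of_ne_of_ne had.symm hbd.symm] at h₁
  rw [swap_apply_of_ne_of_ne hac had, swap_apply_of_ne_of_ne hbc hbd,
    ← swap_mul_swap_comm hab hcd hac had hbc hbd] at h₂
  refine dividedDifference_eq hab (mul_left_cancel₀ (X_sub_X_ne_zero hcd) ?_)
  linear_combination (X a - X b) * X_sub_X_mul_dividedDifference c d (dividedDifference a b f) +
    X_sub_X_mul_dividedDifference a b f - h₂ - X_sub_X_mul_dividedDifference c d f + h₁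

theorem vandermonde_mul_dividedDifference (hab : a ≠ b) (hac : a ≠ c) (hbc : b ≠ c)
    (f : MvPolynomial σ R) :
    (X a - X b) * (X b - X c) * (X a - X c) *
        dividedDifference a b (dividedDifference b c (dividedDifference a b f)) =
      f - rename (swap a b) f - rename (swap b c) f + rename (swap b c * swap a b) f +
        rename (swap a b * swap b c) f - rename (swap a b * swap b c * swap a b) f := by
  have h₁ := X_sub_X_mul_rename_dividedDifference (swap a b) b c (dividedDifference a b f)
  have h₂ := X_sub_X_mul_rename_dividedDifference (swap b c) a b f
  have h₃ := X_sub_X_mul_rename_dividedDifference (swap a b * swap b c) a b f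
  rw [rename_perm_mul, rename_swap_dividedDifference hab] at h₁
  simp only [Perm.mul_apply, swap_apply_left, swap_apply_right, swap_apply_of_ne_of_ne hab hac,
    swap_apply_of_ne_of_ne hac.symm hbc.symm] at h₁ h₂ h₃
  rw [rename_perm_mul] at h₃
  linear_combination
    (X b - X c) * (X a - X c) * X_sub_X_mul_dividedDifference a b
      (dividedDifference b c (dividedDifference a b f)) +
    (X a - X c) * X_sub_X_mul_dividedDifference b c (dividedDifference a b f) -
    (X b - X c) * h₁ + X_sub_X_mul_dividedDifference a b f - h₂ + h₃

theorem dividedDifference_braid (hab : a ≠ b) (hac : a ≠ c) (hbc : b ≠ c)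
    (f : MvPolynomial σ R) :
    dividedDifference a b (dividedDifference b c (dividedDifference a b f)) =
      dividedDifference b c (dividedDifference a b (dividedDifference b c f)) := by
  have habc := vandermonde_mul_dividedDifference hab hac hbc f
  have hcba := vandermonde_mul_dividedDifference hbc.symm hac.symm hab.symm f
  rw [dividedDifference_symm hbc, dividedDifference_symm hab, dividedDifference_symm hbc,
    dividedDifference_neg hab, dividedDifference_neg hbc, dividedDifference_neg hbc,
    swap_comm c b, swap_comm b a] at hcba
  rw [swap_braid hab hac hbc] at habc
  refine mul_left_cancel₀ (mul_ne_zero (mul_ne_zero (X_sub_X_ne_zero hab) (X_sub_X_ne_zero hbc))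
    (X_sub_X_ne_zero hac)) ?_
  linear_combination habc - hcba

end DividedDifference

section Position

variable {N : ℕ} [NeZero N]

theorem pos_val_add_one (a : Fin N) : pos N (a + 1) = a :=
  Fin.ext (by simp [pos, Nat.mod_eq_of_lt a.isLt])

theorem pos_val_add_two {a b : Fin N} (hab : a ⋖ b) : pos N (a + 1 + 1) = b := by
  rw [Nat.covBy_iff_add_one_eq.1 hab.coe_fin, pos_val_add_one]

theorem t_val_add_one {a b : Fin N} (hab : a ⋖ b) : t N (a + 1) (a + 1 + 1) = swap a b := by
  rw [t, pos_val_add_one, pos_val_add_two hab]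

theorem divDiff_val_add_one {a b : Fin N} (hab : a ⋖ b) (f : MvPolynomial (Fin N) ℤ) :
    divDiff (a + 1) f = dividedDifference a b f := by
  have hdvd : X (pos N (a + 1)) - X (pos N (a + 1 + 1)) ∣
      f - rename (t N (a + 1) (a + 1 + 1)) f := by
    rw [t_val_add_one hab, pos_val_add_one, pos_val_add_two hab]
    exact X_sub_X_dvd_sub_rename_swap a b f
  have hspec := hdvd.choose_spec
  rw [divDiff, dif_pos hdvd]
  generalize hdvd.choose = g at hspec
  rw [t_val_add_one hab, pos_val_add_one, pos_val_add_two hab] at hspec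
  exact (dividedDifference_eq hab.ne hspec.symm).symm

end Position

section ReducedWord

variable {N : ℕ} [NeZero N]

theorem redWordAux_one (fuel : ℕ) : redWordAux N fuel 1 = [] := by
  cases fuel with
  | zero => rfl
  | succ fuel =>
    rw [redWordAux, List.find?_eq_none.2]
    intro i hi
    obtain ⟨j, hj, rfl⟩ := List.mem_map.1 hi
    have hj := List.mem_range.1 hj
    simp [val, pos, Nat.mod_eq_of_lt (show j < N by lia), Nat.mod_eq_of_lt (show j + 1 < N by lia)]

theorem exists_descent_redWordAux {u : Perm (Fin N)} (hu : u ≠ 1) :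
    ∃ a b : Fin N, a ⋖ b ∧ u b < u a ∧
      ∀ fuel, redWordAux N (fuel + 1) u = redWordAux N fuel (u * swap a b) ++ [(a : ℕ) + 1] := by
  cases hf : ((List.range (N - 1)).map (· + 1)).find?
      (fun i => decide (val u (i + 1) < val u i)) with
  | none =>
    obtain ⟨a, b, hab, hd⟩ := exists_descent hu
    have hb := Nat.covBy_iff_add_one_eq.1 hab.coe_fin
    refine absurd ?_ (List.find?_eq_none.1 hf (a + 1) ?_)
    · simpa only [decide_eq_true_eq, val, pos_val_add_one, pos_val_add_two hab,
        add_lt_add_iff_right, Fin.val_fin_lt] using hd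
    · exact List.mem_map.2 ⟨a, List.mem_range.2 (by lia), rfl⟩
  | some i =>
    obtain ⟨j, hj, rfl⟩ := List.mem_map.1 (List.mem_of_find?_eq_some hf)
    have hj := List.mem_range.1 hj
    let a : Fin N := ⟨j, by lia⟩
    let b : Fin N := ⟨j + 1, by lia⟩
    have hab : a ⋖ b := by simp [Fin.covBy_iff, a, b]
    refine ⟨a, b, hab, ?_, fun fuel => ?_⟩
    · have hd := List.find?_some hf
      change decide (val u (a + 1 + 1) < val u (a + 1)) = true at hd
      simpa only [decide_eq_true_eq, val, pos_val_add_one, pos_val_add_two hab,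
        add_lt_add_iff_right, Fin.val_fin_lt] using hd
    · rw [redWordAux, hf, ← t_val_add_one hab]

theorem redWordAux_eq_of_len_le {fuel fuel' : ℕ} {u : Perm (Fin N)} (h : len u ≤ fuel)
    (h' : len u ≤ fuel') : redWordAux N fuel u = redWordAux N fuel' u := by
  induction fuel generalizing fuel' u with
  | zero =>
    obtain rfl : u = 1 := by
      by_contra hu
      obtain ⟨a, b, hab, hd⟩ := exists_descent hu
      have := len_mul_swap_of_descent u hab hd
      lia
    rw [redWordAux_one, redWordAux_one]
  | succ fuel ih =>
    by_cases hu : u = 1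
    · rw [hu, redWordAux_one, redWordAux_one]
    · obtain ⟨a, b, hab, hd, hword⟩ := exists_descent_redWordAux hu
      have := len_mul_swap_of_descent u hab hd
      obtain ⟨fuel', rfl⟩ : ∃ n, fuel' = n + 1 := ⟨fuel' - 1, by lia⟩
      rw [hword, hword, ih (fuel' := fuel') (by lia) (by lia)]

/-- The operator `∂_u`, computed along the reduced word `redWord N u`. -/
noncomputable def divDiffPerm (u : Perm (Fin N)) (f : MvPolynomial (Fin N) ℤ) :
    MvPolynomial (Fin N) ℤ :=
  divDiffWord (redWord N u) f

theorem divDiffPerm_one (f : MvPolynomial (Fin N) ℤ) : divDiffPerm 1 f = f := by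
  rw [divDiffPerm, redWord, redWordAux_one, divDiffWord, List.foldr_nil]

theorem exists_descent_divDiffPerm {u : Perm (Fin N)} (hu : u ≠ 1) :
    ∃ a b : Fin N, a ⋖ b ∧ u b < u a ∧
      ∀ f, divDiffPerm u f = divDiffPerm (u * swap a b) (dividedDifference a b f) := by
  obtain ⟨a, b, hab, hd, hword⟩ := exists_descent_redWordAux hu
  refine ⟨a, b, hab, hd, fun f => ?_⟩
  have hlen := len_mul_swap_of_descent u hab hd
  have hle := len_le_mul_self u
  obtain ⟨fuel, hfuel⟩ : ∃ n, N * N = n + 1 := ⟨N * N - 1, by lia⟩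
  have hcons : redWord N u = redWord N (u * swap a b) ++ [(a : ℕ) + 1] := by
    rw [redWord, hfuel, hword, redWord,
      redWordAux_eq_of_len_le (fuel' := N * N) (by lia) (by lia)]
  rw [divDiffPerm, hcons, divDiffWord, List.foldr_append, List.foldr_cons, List.foldr_nil,
    divDiff_val_add_one hab]
  rfl

/-- `∂_u` may be computed by applying first the divided difference at any descent of `u`.
This holds for every `u`, see `divDiffPerm_of_descent`, and is the induction hypothesis in its
proof. -/
def SplitsAtDescents (u : Perm (Fin N)) : Prop :=
  ∀ ⦃a b : Fin N⦄, a ⋖ b → u b < u a →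
    ∀ f, divDiffPerm u f = divDiffPerm (u * swap a b) (dividedDifference a b f)

theorem divDiffPerm_diamond_of_consecutive {u : Perm (Fin N)}
    (ih : ∀ v : Perm (Fin N), len v < len u → SplitsAtDescents v) {p q r : Fin N} (hpq : p ⋖ q)
    (hqr : q ⋖ r) (hdpq : u q < u p) (hdqr : u r < u q) (f : MvPolynomial (Fin N) ℤ) :
    divDiffPerm (u * swap p q) (dividedDifference p q f) =
      divDiffPerm (u * swap q r) (dividedDifference q r f) := by
  have hpr : p ≠ r := (hpq.lt.trans hqr.lt).ne
  have hp : swap q r p = p := swap_apply_of_ne_of_ne hpq.ne hpr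
  have hr : swap p q r = r := swap_apply_of_ne_of_ne hpr.symm hqr.ne'
  have hdpr := hdqr.trans hdpq
  have hpq₁ := len_mul_swap_of_descent u hpq hdpq
  have hqr₁ := len_mul_swap_of_descent u hqr hdqr
  have hpq_qr : (u * swap p q) r < (u * swap p q) q := by simpa [hr] using hdpr
  have hqr_pq : (u * swap q r) q < (u * swap q r) p := by simpa [hp] using hdpr
  have hpq₂ := len_mul_swap_of_descent _ hqr hpq_qr
  have hqr₂ := len_mul_swap_of_descent _ hpq hqr_pq
  rw [ih _ (by lia) hqr hpq_qr, ih _ (by lia) hpq (by simpa [hp, hr] using hdqr),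
    ih (u * swap q r) (by lia) hpq hqr_pq, ih (u * swap q r * swap p q) (by lia) hqr
      (by simpa [hp, hr] using hdpq),
    dividedDifference_braid hpq.ne hpr hqr.ne]
  simp only [mul_assoc]
  rw [← mul_assoc (swap p q), swap_braid hpq.ne hpr hqr.ne, mul_assoc]

theorem divDiffPerm_diamond_of_disjoint {u : Perm (Fin N)}
    (ih : ∀ v : Perm (Fin N), len v < len u → SplitsAtDescents v) {a b c d : Fin N} (hab : a ⋖ b)
    (hcd : c ⋖ d) (hac : a ≠ c) (had : a ≠ d) (hbc : b ≠ c) (hbd : b ≠ d) (hdab : u b < u a)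
    (hdcd : u d < u c) (f : MvPolynomial (Fin N) ℤ) :
    divDiffPerm (u * swap a b) (dividedDifference a b f) =
      divDiffPerm (u * swap c d) (dividedDifference c d f) := by
  have hlab := len_mul_swap_of_descent u hab hdab
  have hlcd := len_mul_swap_of_descent u hcd hdcd
  have hdcd' : (u * swap a b) d < (u * swap a b) c := by
    simpa [swap_apply_of_ne_of_ne had.symm hbd.symm, swap_apply_of_ne_of_ne hac.symm hbc.symm]
  have hdab' : (u * swap c d) b < (u * swap c d) a := by
    simpa [swap_apply_of_ne_of_ne hbc hbd, swap_apply_of_ne_of_ne hac had]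
  rw [ih _ (by lia) hcd hdcd', ih _ (by lia) hab hdab',
    dividedDifference_comm hab.ne hcd.ne hac had hbc hbd, mul_assoc, mul_assoc,
    swap_mul_swap_comm hab.ne hcd.ne hac had hbc hbd]

theorem divDiffPerm_of_descent (u : Perm (Fin N)) : SplitsAtDescents u := by
  induction h : len u using Nat.strong_induction_on generalizing u with
  | _ l ih =>
  subst h
  replace ih : ∀ v : Perm (Fin N), len v < len u → SplitsAtDescents v := fun v hv => ih _ hv v rfl
  intro a b hab hd f
  have hu : u ≠ 1 := by
    rintro rfl
    exact hab.lt.not_gt hd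
  obtain ⟨c, d, hcd, hd', hsplit⟩ := exists_descent_divDiffPerm hu
  rw [hsplit]
  rcases eq_or_ne a c with rfl | hac
  · rw [hab.unique_right hcd]
  rcases eq_or_ne b c with rfl | hbc
  · exact (divDiffPerm_diamond_of_consecutive ih hab hcd hd hd' f).symm
  rcases eq_or_ne a d with rfl | had
  · exact divDiffPerm_diamond_of_consecutive ih hcd hab hd' hd f
  have hbd : b ≠ d := by
    rintro rfl
    exact hac (hab.unique_left hcd)
  exact (divDiffPerm_diamond_of_disjoint ih hab hcd hac had hbc hbd hd hd' f).symm

end ReducedWord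

section DivDiffPerm

variable {N : ℕ} [NeZero N] (u : Perm (Fin N)) {a b : Fin N}

theorem divDiffPerm_add (f g : MvPolynomial (Fin N) ℤ) :
    divDiffPerm u (f + g) = divDiffPerm u f + divDiffPerm u g := by
  induction u using descent_induction generalizing f g with
  | one => simp only [divDiffPerm_one]
  | descent u a b hab hd ih =>
    simp only [divDiffPerm_of_descent u hab hd, dividedDifference_add hab.ne, ih]

/-- `∂_u` as a homomorphism of additive groups. -/
noncomputable def divDiffPermHom : MvPolynomial (Fin N) ℤ →+ MvPolynomial (Fin N) ℤ :=
  AddMonoidHom.mk' (divDiffPerm u) (divDiffPerm_add u)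

theorem divDiffPerm_zero : divDiffPerm u (0 : MvPolynomial (Fin N) ℤ) = 0 :=
  (divDiffPermHom u).map_zero

theorem divDiffPerm_neg (f : MvPolynomial (Fin N) ℤ) : divDiffPerm u (-f) = -divDiffPerm u f :=
  (divDiffPermHom u).map_neg f

theorem divDiffPerm_dividedDifference_of_descent (hab : a ⋖ b) (h : u b < u a)
    (f : MvPolynomial (Fin N) ℤ) : divDiffPerm u (dividedDifference a b f) = 0 := by
  rw [divDiffPerm_of_descent u hab h, dividedDifference_dividedDifference hab.ne, divDiffPerm_zero]

theorem divDiffPerm_mul_of_isSymmetric {g : MvPolynomial (Fin N) ℤ} (hg : g.IsSymmetric)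
    (f : MvPolynomial (Fin N) ℤ) : divDiffPerm u (g * f) = g * divDiffPerm u f := by
  induction u using descent_induction generalizing f with
  | one => simp only [divDiffPerm_one]
  | descent u a b hab hd ih =>
    rw [divDiffPerm_of_descent u hab hd, divDiffPerm_of_descent u hab hd,
      dividedDifference_mul_of_rename_eq hab.ne _ (hg _), ih]

theorem divDiffPerm_divDiffPerm (v : Perm (Fin N)) (f : MvPolynomial (Fin N) ℤ) :
    divDiffPerm u (divDiffPerm v f) =
      if len (u * v) = len u + len v then divDiffPerm (u * v) f else 0 := by
  induction v using descent_induction generalizing f with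
  | one => simp [divDiffPerm_one, len_one]
  | descent v a b hab hd ih =>
    have hv := len_mul_swap_of_descent v hab hd
    have hle := len_mul_le u (v * swap a b)
    rw [divDiffPerm_of_descent v hab hd, ih]
    rw [← mul_assoc] at hle ⊢
    rcases lt_or_gt_of_ne ((u * v).injective.ne hab.ne) with h | h
    · have huv := len_mul_swap_of_ascent _ hab h
      rw [divDiffPerm_dividedDifference_of_descent _ hab (by simpa using h), ite_self,
        if_neg (by lia)]
    · have huv := len_mul_swap_of_descent _ hab h
      rw [divDiffPerm_of_descent (u * v) hab h]
      exact if_congr (by lia) rfl rfl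

end DivDiffPerm

/-! ### The Leibniz rule for `∂_u` -/

section Leibniz

variable {N : ℕ} {p q i b : Fin N}

theorem swap_lt_swap_of_covBy (hpq : p ⋖ q) (hib : i < b) (h : ¬(i = p ∧ b = q)) :
    swap p q i < swap p q b := by
  have hpq := Nat.covBy_iff_add_one_eq.1 hpq.coe_fin
  rw [swap_apply_def, swap_apply_def]
  simp only [Fin.lt_def, Fin.ext_iff] at *
  split_ifs <;> omega

/-- The sign of `b - i`. -/
noncomputable def orderSign (i b : Fin N) : ℤ :=
  if i < b then 1 else if b < i then -1 else 0

theorem orderSign_of_lt (h : i < b) : orderSign i b = 1 := if_pos h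

theorem orderSign_of_gt (h : b < i) : orderSign i b = -1 := by
  rw [orderSign, if_neg h.not_gt, if_pos h]

theorem orderSign_self (i : Fin N) : orderSign i i = 0 := by
  rw [orderSign, if_neg (lt_irrefl i), if_neg (lt_irrefl i)]

theorem orderSign_swap_of_covBy (hpq : p ⋖ q) (h : ¬(i = p ∧ b = q)) (h' : ¬(i = q ∧ b = p)) :
    orderSign (swap p q i) (swap p q b) = orderSign i b := by
  rcases lt_trichotomy i b with hib | rfl | hib
  · rw [orderSign_of_lt hib, orderSign_of_lt (swap_lt_swap_of_covBy hpq hib h)]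
  · rw [orderSign_self, orderSign_self]
  · rw [orderSign_of_gt hib,
      orderSign_of_gt (swap_lt_swap_of_covBy hpq hib (fun e => h' e.symm))]

theorem descent_mul_swap_of_lt (hpq : p ⋖ q) (hib : i < b) {u : Perm (Fin N)}
    (hcover : len (u * swap i b) + 1 = len u) (h : ¬(i = p ∧ b = q)) (hd : u q < u p) :
    (u * swap i b) q < (u * swap i b) p := by
  set v := u * swap i b with hv
  by_contra hasc
  have hasc : v p < v q := (not_lt.1 hasc).lt_of_ne (v.injective.ne hpq.ne)
  have hvib : v i < v b := ((len_mul_swap_add_one_eq_iff u hib).1 hcover).1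
  have hus : v * swap p q * swap (swap p q i) (swap p q b) = u * swap p q := by
    rw [← mul_swap_mul_swap_eq, hv, mul_swap_mul_self]
  have hlen : len (v * swap p q) < len (u * swap p q) := by
    have := len_mul_swap_lt (u * swap p q) (swap_lt_swap_of_covBy hpq hib h) <| by
      rw [← hus]
      simpa using hvib
    rwa [← hus, mul_swap_mul_self, hus] at this
  have := len_mul_swap_of_ascent v hpq hasc
  have := len_mul_swap_of_descent u hpq hd
  lia

theorem descent_mul_swap (hpq : p ⋖ q) {u : Perm (Fin N)}
    (hcover : len (u * swap i b) + 1 = len u) (h : ¬(i = p ∧ b = q)) (h' : ¬(i = q ∧ b = p))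
    (hd : u q < u p) : (u * swap i b) q < (u * swap i b) p := by
  rcases lt_trichotomy i b with hib | rfl | hib
  · exact descent_mul_swap_of_lt hpq hib hcover h hd
  · rw [swap_self, ← Perm.one_def, mul_one] at hcover
    lia
  · rw [swap_comm] at hcover ⊢
    exact descent_mul_swap_of_lt hpq hib hcover (fun e => h' e.symm) hd

variable [NeZero N]

/-- The contribution of the transposition of `i` and `b` to the expansion of `∂_u (x_i f)`. -/
noncomputable def leibnizTerm (u : Perm (Fin N)) (i b : Fin N) (f : MvPolynomial (Fin N) ℤ) :
    MvPolynomial (Fin N) ℤ :=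
  orderSign i b • if len (u * swap i b) + 1 = len u then divDiffPerm (u * swap i b) f else 0

theorem leibnizTerm_eq_zero {u : Perm (Fin N)} (h : len (u * swap i b) + 1 ≠ len u)
    (f : MvPolynomial (Fin N) ℤ) : leibnizTerm u i b f = 0 := by
  rw [leibnizTerm, if_neg h, smul_zero]

theorem leibnizTerm_of_ne {u : Perm (Fin N)} (hpq : p ⋖ q) (hd : u q < u p)
    (h : ¬(i = p ∧ b = q)) (h' : ¬(i = q ∧ b = p)) (f : MvPolynomial (Fin N) ℤ) :
    leibnizTerm (u * swap p q) (swap p q i) (swap p q b) (dividedDifference p q f) =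
      leibnizTerm u i b f := by
  rw [leibnizTerm, leibnizTerm, orderSign_swap_of_covBy hpq h h', ← mul_swap_mul_swap_eq]
  congr 1
  have hu := len_mul_swap_of_descent u hpq hd
  rcases lt_or_gt_of_ne ((u * swap i b).injective.ne hpq.ne) with hasc | hdesc
  · rw [divDiffPerm_dividedDifference_of_descent _ hpq (by simpa using hasc), ite_self,
      if_neg fun hc => (descent_mul_swap hpq hc h h' hd).not_gt hasc]
  · have := len_mul_swap_of_descent _ hpq hdesc
    rw [← divDiffPerm_of_descent _ hpq hdesc]
    exact if_congr (by lia) rfl rfl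

theorem leibnizTerm_of_descent {u : Perm (Fin N)} (hpq : p ⋖ q) (hd : u q < u p) (i b : Fin N)
    (f : MvPolynomial (Fin N) ℤ) :
    leibnizTerm u i b f =
      leibnizTerm (u * swap p q) (swap p q i) (swap p q b) (dividedDifference p q f) +
        if i = p ∧ b = q then divDiffPerm (u * swap p q) f
        else if i = q ∧ b = p then -divDiffPerm (u * swap p q) f else 0 := by
  have hu := len_mul_swap_of_descent u hpq hd
  by_cases h : i = p ∧ b = q
  · obtain ⟨rfl, rfl⟩ := h
    have hzero : leibnizTerm (u * swap i b) (swap i b i) (swap i b b) (dividedDifference i b f) =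
        0 := leibnizTerm_eq_zero (by rw [← mul_swap_mul_swap_eq, mul_swap_mul_self]; lia) _
    rw [hzero, if_pos ⟨rfl, rfl⟩, leibnizTerm, orderSign_of_lt hpq.lt, if_pos hu, one_smul,
      zero_add]
  by_cases h' : i = q ∧ b = p
  · obtain ⟨rfl, rfl⟩ := h'
    have hzero : leibnizTerm (u * swap b i) (swap b i i) (swap b i b) (dividedDifference b i f) =
        0 := leibnizTerm_eq_zero
          (by rw [← mul_swap_mul_swap_eq, swap_comm i b, mul_swap_mul_self]; lia) _
    rw [hzero, if_neg h, if_pos ⟨rfl, rfl⟩, leibnizTerm, orderSign_of_gt hpq.lt, swap_comm i b,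
      if_pos hu, neg_smul, one_smul, zero_add]
  rw [leibnizTerm_of_ne hpq hd h h', if_neg h, if_neg h', add_zero]

theorem divDiffPerm_X_mul (u : Perm (Fin N)) (i : Fin N) (f : MvPolynomial (Fin N) ℤ) :
    divDiffPerm u (X i * f) = X (u i) * divDiffPerm u f + ∑ b, leibnizTerm u i b f := by
  induction u using descent_induction generalizing i f with
  | one => simp [divDiffPerm_one, leibnizTerm, len_one]
  | descent u p q hpq hd ih =>
    rw [divDiffPerm_of_descent u hpq hd, dividedDifference_X_mul hpq.ne, divDiffPerm_add, ih,
      ← divDiffPerm_of_descent u hpq hd, Perm.mul_apply, swap_apply_self, add_assoc,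
      ← Equiv.sum_comp (swap p q)]
    simp only [leibnizTerm_of_descent hpq hd i, Finset.sum_add_distrib]
    congr 2
    by_cases hip : i = p
    · simp [hip, hpq.ne]
    by_cases hiq : i = q
    · simp [hiq, hpq.ne', divDiffPerm_neg]
    · simp [hip, hiq, divDiffPerm_zero]

end Leibniz

/-! ### Duality with the Schubert polynomials -/

section SchubertFunctional

variable {N : ℕ} [NeZero N]

/-- The functional `f ↦ (∂_u f)(0)`. It vanishes on `symIdeal N`, and these functionals form the
basis of the dual of `HRing N` that is dual to the classes of the Schubert polynomials. -/
noncomputable def schubertFunctional (u : Perm (Fin N)) : MvPolynomial (Fin N) ℤ →+ ℤ :=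
  (constantCoeff (R := ℤ) (σ := Fin N)).toAddMonoidHom.comp (divDiffPermHom u)

theorem schubertFunctional_apply (u : Perm (Fin N)) (f : MvPolynomial (Fin N) ℤ) :
    schubertFunctional u f = constantCoeff (divDiffPerm u f) := rfl

theorem schubertFunctional_one (u : Perm (Fin N)) :
    schubertFunctional u 1 = if u = 1 then 1 else 0 := by
  rw [schubertFunctional_apply]
  split_ifs with h
  · rw [h, divDiffPerm_one, map_one]
  · obtain ⟨a, b, hab, hd⟩ := exists_descent h
    rw [divDiffPerm_of_descent u hab hd, dividedDifference_one hab.ne, divDiffPerm_zero, map_zero]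

theorem schubertFunctional_X_mul (u : Perm (Fin N)) (i : Fin N) (f : MvPolynomial (Fin N) ℤ) :
    schubertFunctional u (X i * f) = ∑ b, orderSign i b *
      if len (u * swap i b) + 1 = len u then schubertFunctional (u * swap i b) f else 0 := by
  rw [schubertFunctional_apply, divDiffPerm_X_mul, map_add, map_mul, constantCoeff_X, zero_mul,
    zero_add, map_sum]
  refine Finset.sum_congr rfl fun b _ => ?_
  rw [leibnizTerm, map_zsmul, smul_eq_mul, apply_ite constantCoeff, map_zero]
  rfl

theorem schubertFunctional_eq_zero_of_mem_symIdeal (u : Perm (Fin N)) {f : MvPolynomial (Fin N) ℤ}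
    (hf : f ∈ symIdeal N) : schubertFunctional u f = 0 := by
  rw [symIdeal] at hf
  induction hf using Submodule.span_induction generalizing u with
  | mem f hf =>
    rw [← mul_one f, schubertFunctional_apply, divDiffPerm_mul_of_isSymmetric _ hf.1, map_mul, hf.2,
      zero_mul]
  | zero => exact map_zero _
  | add f g _ _ hf hg => rw [map_add, hf, hg, add_zero]
  | smul r f _ hf =>
    rw [smul_eq_mul]
    induction r using MvPolynomial.induction_on generalizing u with
    | C r => rw [C_mul', map_zsmul, hf, smul_zero]
    | add p q hp hq => rw [add_mul, map_add, hp, hq, add_zero]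
    | mul_X p i hp =>
      rw [mul_comm p, mul_assoc, schubertFunctional_X_mul]
      exact Finset.sum_eq_zero fun b _ => by rw [hp, ite_self, mul_zero]

/-- The Schubert functionals take the same values on `f` as on `𝔖_w`. -/
def IsDualTo (f : MvPolynomial (Fin N) ℤ) (w : Perm (Fin N)) : Prop :=
  ∀ u, schubertFunctional u f = if u = w then 1 else 0

theorem IsDualTo.X_mul {f : MvPolynomial (Fin N) ℤ} {w : Perm (Fin N)} (hf : IsDualTo f w)
    {i c : Fin N} (hic : i < c) (hc : len (w * swap i c) = len w + 1)
    (hunique : ∀ b, len (w * swap i b) = len w + 1 → b = c) :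
    IsDualTo (X i * f) (w * swap i c) := by
  intro u
  have heq (b : Fin N) : u * swap i b = w ↔ u = w * swap i b := by
    rw [← eq_mul_inv_iff_mul_eq, swap_inv]
  rw [schubertFunctional_X_mul, Finset.sum_eq_single c _ (by simp)]
  · rw [orderSign_of_lt hic, one_mul, hf]
    by_cases hu : u = w * swap i c
    · have hw := (heq c).2 hu
      rw [if_pos hu, if_pos hw, if_pos (by rw [hw, hu, hc])]
    · rw [if_neg hu, if_neg (mt (heq c).1 hu), ite_self]
  · intro b _ hbc
    rw [hf, ← ite_and, if_neg, mul_zero]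
    rintro ⟨hlen, hw⟩
    rw [hw, (heq b).1 hw] at hlen
    exact hbc (hunique b hlen.symm)

end SchubertFunctional

section Staircase

variable {N : ℕ}

/-- The permutation dual to `x₀^{N-1} ⋯ x_{i-1}^{N-i} x_i^j` (indices starting from `0`): it agrees
with `w₀` before position `i`, takes the value `j` at `i`, and is increasing from `i + 1` on. -/
def IsStaircaseStage (w : Perm (Fin N)) (i j : ℕ) : Prop :=
  ∀ p : Fin N, (p.val < i → (w p).val + p.val + 1 = N) ∧ (p.val = i → (w p).val = j) ∧
    (i < p.val → p.val ≤ i + j → (w p).val + i + 1 = p.val) ∧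
    (i + j < p.val → (w p).val + i = p.val)

variable {w : Perm (Fin N)} {i j : ℕ}

theorem isStaircaseStage_one : IsStaircaseStage (1 : Perm (Fin N)) 0 0 := fun p =>
  ⟨by lia, by simp, by lia, by simp⟩

theorem IsStaircaseStage.eq_w0 (h : IsStaircaseStage w N 0) : w = w0 N := by
  ext p
  have := (h p).1 p.isLt
  change (w p).val = p.rev.val
  rw [Fin.val_rev]
  lia

theorem IsStaircaseStage.next_row (hi : i < N) (h : IsStaircaseStage w i (N - 1 - i)) :
    IsStaircaseStage w (i + 1) 0 := by
  intro p
  have := h p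
  lia

theorem IsStaircaseStage.apply_left (hi : i < N) (h : IsStaircaseStage w i j) :
    (w ⟨i, hi⟩).val = j := (h _).2.1 rfl

theorem IsStaircaseStage.apply_right (hij : i + j + 1 < N) (h : IsStaircaseStage w i j) :
    (w ⟨i + j + 1, hij⟩).val = j + 1 := by
  have := (h ⟨i + j + 1, hij⟩).2.2.2
  simp only at this
  lia

theorem IsStaircaseStage.len_mul_swap (hij : i + j + 1 < N) (h : IsStaircaseStage w i j) :
    len (w * swap ⟨i, by lia⟩ ⟨i + j + 1, hij⟩) = len w + 1 := by
  have hl := h.apply_left (by lia)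
  have hr := h.apply_right hij
  rw [len_mul_swap_eq_add_one_iff w (by simp [Fin.lt_def, add_assoc]), IsBruhatCover]
  simp only [Set.mem_Ioo, Fin.lt_def]
  lia

theorem IsStaircaseStage.eq_of_len_mul_swap (hij : i + j + 1 < N) (h : IsStaircaseStage w i j)
    {b : Fin N} (hb : len (w * swap ⟨i, by lia⟩ b) = len w + 1) : b = ⟨i + j + 1, hij⟩ := by
  have hl := h.apply_left (by lia)
  have hr := h.apply_right hij
  have hwb := h b
  rcases lt_trichotomy (⟨i, by lia⟩ : Fin N) b with hib | rfl | hib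
  · rw [len_mul_swap_eq_add_one_iff w hib, IsBruhatCover] at hb
    have := hb.2 ⟨i + j + 1, hij⟩
    simp only [Set.mem_Ioo, Fin.lt_def, Fin.ext_iff] at *
    lia
  · rw [swap_self, ← Perm.one_def, mul_one] at hb
    lia
  · rw [swap_comm, len_mul_swap_eq_add_one_iff w hib, IsBruhatCover] at hb
    simp only [Fin.lt_def] at *
    lia

theorem IsStaircaseStage.next_column (hij : i + j + 1 < N) (h : IsStaircaseStage w i j) :
    IsStaircaseStage (w * swap ⟨i, by lia⟩ ⟨i + j + 1, hij⟩) i (j + 1) := by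
  intro p
  have hl := h.apply_left (by lia)
  have hr := h.apply_right hij
  have hp := h p
  rw [Perm.mul_apply, swap_apply_def]
  split_ifs with hpi hpc
  · rw [hr, hpi]
    lia
  · rw [hl, hpc]
    lia
  · rw [Fin.ext_iff] at hpi hpc
    lia

variable [NeZero N]

theorem IsDualTo.X_pow_mul {f : MvPolynomial (Fin N) ℤ} (hf : IsDualTo f w)
    (hw : IsStaircaseStage w i 0) (hij : i + j < N) :
    ∃ v, IsStaircaseStage v i j ∧ IsDualTo (X ⟨i, by lia⟩ ^ j * f) v := by
  induction j with
  | zero => exact ⟨w, hw, by simpa using hf⟩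
  | succ j ih =>
    obtain ⟨v, hv, hvf⟩ := ih (by lia)
    refine ⟨_, hv.next_column hij, ?_⟩
    rw [pow_succ', mul_assoc]
    exact hvf.X_mul (by simp [Fin.lt_def, add_assoc]) (hv.len_mul_swap hij)
      fun b hb => hv.eq_of_len_mul_swap hij hb

theorem exists_isDualTo_prod_range (hi : i ≤ N) : ∃ w : Perm (Fin N), IsStaircaseStage w i 0 ∧
    IsDualTo (∏ p ∈ Finset.range i, X (Fin.ofNat N p) ^ (N - 1 - p)) w := by
  induction i with
  | zero => exact ⟨1, isStaircaseStage_one, schubertFunctional_one⟩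
  | succ i ih =>
    obtain ⟨w, hw, hdual⟩ := ih (by lia)
    obtain ⟨v, hv, hvdual⟩ := hdual.X_pow_mul hw (j := N - 1 - i) (by lia)
    refine ⟨v, hv.next_row hi, ?_⟩
    rwa [Finset.prod_range_succ, mul_comm, show Fin.ofNat N i = ⟨i, hi⟩ from
      Fin.ext (Nat.mod_eq_of_lt hi)]

theorem isDualTo_staircase : IsDualTo (staircase N) (w0 N) := by
  obtain ⟨w, hw, hdual⟩ := exists_isDualTo_prod_range (le_refl N)
  rw [Finset.prod_range] at hdual
  simpa only [← hw.eq_w0, staircase, Fin.ofNat_val_eq_self] using hdual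

theorem isDualTo_schubertPoly (w : Perm (Fin N)) : IsDualTo (schubertPoly N w) w := by
  intro u
  have hpoly : schubertPoly N w = divDiffPerm (w⁻¹ * w0 N) (staircase N) := rfl
  rw [schubertFunctional_apply, hpoly, divDiffPerm_divDiffPerm, apply_ite constantCoeff, map_zero,
    ← schubertFunctional_apply, isDualTo_staircase]
  have heq : u * (w⁻¹ * w0 N) = w0 N ↔ u = w := by rw [← mul_assoc, mul_eq_right, mul_inv_eq_one]
  have hlen (h : u = w) : len (u * (w⁻¹ * w0 N)) = len u + len (w⁻¹ * w0 N) := by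
    rw [heq.2 h, ← len_mul_w0_add_len w⁻¹, len_inv, h, add_comm]
  rw [← ite_and, if_congr (and_iff_right_of_imp fun h => hlen (heq.1 h)) rfl rfl,
    if_congr heq rfl rfl]

end Staircase

/-! ### The Bruhat operators -/

section BruhatOperators

variable {N : ℕ} {a b c d k : Fin N}

theorem len_lt_len_mul_swap_iff (hab : a < b) (w : Perm (Fin N)) :
    len w < len (w * swap a b) ↔ w a < w b := by
  rcases lt_or_gt_of_ne (w.injective.ne hab.ne) with h | h
  · have := len_mul_swap_lt (w * swap a b) hab (by simpa using h)
    rw [mul_swap_mul_self] at this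
    exact iff_of_true this h
  · exact iff_of_false (len_mul_swap_lt w hab h).not_gt h.not_gt

/-- The matrix of the operator sending `w` to `w * t_{a,b}` if this raises the length by one, and
to `0` otherwise. It acts on row vectors: the entry at `(w, u)` is the coefficient of `u` in the
image of `w`. -/
noncomputable def bruhatOp (a b : Fin N) : Matrix (Perm (Fin N)) (Perm (Fin N)) ℤ :=
  fun w u => if u = w * swap a b ∧ len u = len w + 1 then 1 else 0

theorem bruhatOp_swap (a b : Fin N) : bruhatOp a b = bruhatOp b a := by
  unfold bruhatOp
  rw [swap_comm]

theorem vecMul_bruhatOp_apply (v : Perm (Fin N) → ℤ) (a b : Fin N) (u : Perm (Fin N)) :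
    Matrix.vecMul v (bruhatOp a b) u =
      if len (u * swap a b) + 1 = len u then v (u * swap a b) else 0 := by
  rw [Matrix.vecMul, dotProduct, Finset.sum_eq_single (u * swap a b)]
  · simp [bruhatOp, mul_swap_mul_self, eq_comm]
  · intro w _ hw
    rw [bruhatOp, if_neg, mul_zero]
    rintro ⟨rfl, -⟩
    exact hw (mul_swap_mul_self a b w).symm
  · simp

theorem mul_bruhatOp_apply (A : Matrix (Perm (Fin N)) (Perm (Fin N)) ℤ) (a b : Fin N)
    (w u : Perm (Fin N)) :
    (A * bruhatOp a b) w u =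
      if len (u * swap a b) + 1 = len u then A w (u * swap a b) else 0 := by
  rw [Matrix.mul_apply_eq_vecMul, vecMul_bruhatOp_apply]

theorem bruhatOp_mul_bruhatOp_apply (hab : a < b) (hcd : c < d) (w u : Perm (Fin N)) :
    (bruhatOp a b * bruhatOp c d) w u =
      if u = w * (swap a b * swap c d) ∧ len u = len w + 2 ∧ w a < w b ∧
        w (swap a b c) < w (swap a b d) then 1 else 0 := by
  rw [mul_bruhatOp_apply, bruhatOp, ← ite_and]
  refine if_congr ?_ rfl rfl
  rw [← len_lt_len_mul_swap_iff hab w, ← Perm.mul_apply w, ← Perm.mul_apply w,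
    ← len_lt_len_mul_swap_iff hcd]
  have heq : u * swap c d = w * swap a b ↔ u = w * (swap a b * swap c d) := by
    rw [← eq_mul_inv_iff_mul_eq, swap_inv, mul_assoc]
  rw [heq]
  by_cases hu : u = w * (swap a b * swap c d)
  · rw [heq.2 hu, mul_assoc w, ← hu]
    lia
  · tauto

theorem bruhatOp_commute (hab : a < b) (hcd : c < d) (hac : a ≠ c) (had : a ≠ d) (hbc : b ≠ c)
    (hbd : b ≠ d) : Commute (bruhatOp a b) (bruhatOp c d) := by
  ext w u
  rw [bruhatOp_mul_bruhatOp_apply hab hcd, bruhatOp_mul_bruhatOp_apply hcd hab,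
    swap_mul_swap_comm hab.ne hcd.ne hac had hbc hbd, swap_apply_of_ne_of_ne hac.symm hbc.symm,
    swap_apply_of_ne_of_ne had.symm hbd.symm, swap_apply_of_ne_of_ne hac had,
    swap_apply_of_ne_of_ne hbc hbd]
  exact if_congr (by tauto) rfl rfl

-- All three products act as `t_{k,b} t_{a,k}`, and require the length to rise by two and `w b` to
-- exceed `w a` and `w k`; the two on the right moreover compare `w a` with `w k`.
theorem bruhatOp_mul_bruhatOp_eq_add (hak : a < k) (hkb : k < b) :
    bruhatOp k b * bruhatOp a k = bruhatOp a b * bruhatOp k b + bruhatOp a k * bruhatOp a b := by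
  have hab := hak.trans hkb
  ext w u
  have hcycle : swap a b * swap k b = swap k b * swap a k := by
    rw [mul_swap_eq_swap_mul (swap k b), swap_apply_left, swap_apply_of_ne_of_ne hak.ne hab.ne]
  have hcycle' : swap a k * swap a b = swap k b * swap a k := by
    rw [mul_swap_eq_swap_mul, swap_apply_left, swap_apply_of_ne_of_ne hab.ne' hkb.ne']
  rw [Matrix.add_apply, bruhatOp_mul_bruhatOp_apply hkb hak, bruhatOp_mul_bruhatOp_apply hab hkb,
    bruhatOp_mul_bruhatOp_apply hak hab, hcycle, hcycle', swap_apply_left, swap_apply_left,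
    swap_apply_right, swap_apply_of_ne_of_ne hak.ne hab.ne, swap_apply_of_ne_of_ne hak.ne' hkb.ne,
    swap_apply_of_ne_of_ne hab.ne' hkb.ne']
  rcases lt_or_gt_of_ne (w.injective.ne hak.ne) with h | h
  · simp only [h, h.not_gt, and_false, if_false, true_and, zero_add]
    exact if_congr (by grind) rfl rfl
  · simp only [h, h.not_gt, and_false, if_false, and_true, false_and, add_zero]
    exact if_congr (by grind) rfl rfl

end BruhatOperators

/-! ### Chains with distinct leaves -/

section AdjoinCentre

variable {σ A : Type*} [DecidableEq σ]

/-- The operator on `A`-valued functions of finite sets with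
`adjoinCentre g F J = ∑ F (J \ {b₁, …, b_r}) * g b₁ * ⋯ * g b_r`, the sum being over all sequences
of distinct elements `b₁, …, b_r` of `J`. -/
noncomputable def adjoinCentre [NonUnitalNonAssocSemiring A] (g : σ → A) (F : Finset σ → A)
    (J : Finset σ) : A :=
  F J + ∑ b : {b // b ∈ J}, adjoinCentre g F (J.erase b.1) * g b.1
termination_by J.card
decreasing_by exact Finset.card_erase_lt_of_mem b.2

theorem adjoinCentre_eq [NonUnitalNonAssocSemiring A] (g : σ → A) (F : Finset σ → A)
    (J : Finset σ) :
    adjoinCentre g F J = F J + ∑ b ∈ J, adjoinCentre g F (J.erase b) * g b := by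
  rw [adjoinCentre, Finset.univ_eq_attach,
    Finset.sum_attach J fun b => adjoinCentre g F (J.erase b) * g b]

variable [NonUnitalRing A]

theorem adjoinCentre_adjoinCentre (g h : σ → A) (F : Finset σ → A) (J : Finset σ) :
    adjoinCentre g (adjoinCentre h F) J =
      F J + (∑ c ∈ J, adjoinCentre g (adjoinCentre h F) (J.erase c) * h c +
        ∑ b ∈ J, adjoinCentre g (adjoinCentre h F) (J.erase b) * g b) -
      ∑ c ∈ J, ∑ b ∈ J.erase c,
        adjoinCentre g (adjoinCentre h F) ((J.erase c).erase b) * (g b * h c) := by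
  have hsum (c : σ) : adjoinCentre h F (J.erase c) * h c =
      adjoinCentre g (adjoinCentre h F) (J.erase c) * h c -
        ∑ b ∈ J.erase c,
          adjoinCentre g (adjoinCentre h F) ((J.erase c).erase b) * (g b * h c) := by
    rw [adjoinCentre_eq g _ (J.erase c), add_mul, Finset.sum_mul]
    simp only [mul_assoc]
    abel
  rw [adjoinCentre_eq g _ J, adjoinCentre_eq h F J, Finset.sum_congr rfl fun c _ => hsum c,
    Finset.sum_sub_distrib]
  abel

theorem adjoinCentre_comm (g h : σ → A) (F : Finset σ → A) (J : Finset σ)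
    (hgh : ∀ b ∈ J, ∀ c ∈ J, b ≠ c → Commute (g b) (h c)) :
    adjoinCentre g (adjoinCentre h F) J = adjoinCentre h (adjoinCentre g F) J := by
  induction J using Finset.strongInduction with
  | H J ih =>
    replace ih (K : Finset σ) (hK : K ⊂ J) :
        adjoinCentre g (adjoinCentre h F) K = adjoinCentre h (adjoinCentre g F) K :=
      ih K hK fun b hb c hc => hgh b (hK.1 hb) c (hK.1 hc)
    rw [adjoinCentre_adjoinCentre g h, adjoinCentre_adjoinCentre h g]
    congr 1
    · rw [add_comm (∑ c ∈ J, _ * h c)]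
      congr 2 <;> exact Finset.sum_congr rfl fun b hb => by rw [ih _ (Finset.erase_ssubset hb)]
    · rw [Finset.sum_comm' (t' := J) (s' := fun b => J.erase b) fun b c => by
        simp only [Finset.mem_erase]; tauto]
      refine Finset.sum_congr rfl fun b hb => Finset.sum_congr rfl fun c hc => ?_
      obtain ⟨hcb, hc⟩ := Finset.mem_erase.1 hc
      rw [Finset.erase_right_comm, (hgh b hb c hc hcb.symm).eq,
        ih _ ((Finset.erase_subset _ _).trans_ssubset (Finset.erase_ssubset hb))]

theorem sum_powersetCard_succ_sum_erase {M : Type*} [AddCommMonoid M] (U : Finset σ) (m : ℕ)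
    (f : Finset σ → σ → M) :
    ∑ J ∈ U.powersetCard (m + 1), ∑ b ∈ J, f (J.erase b) b =
      ∑ J ∈ U.powersetCard m, ∑ b ∈ U \ J, f J b := by
  rw [Finset.sum_sigma', Finset.sum_sigma']
  refine Finset.sum_nbij' (fun p => ⟨p.1.erase p.2, p.2⟩) (fun p => ⟨insert p.2 p.1, p.2⟩)
    ?_ ?_ ?_ ?_ fun _ _ => rfl
  all_goals
    rintro ⟨J, b⟩ hp
    simp only [Finset.mem_sigma, Finset.mem_powersetCard, Finset.mem_sdiff] at *
  · refine ⟨⟨(Finset.erase_subset _ _).trans hp.1.1, ?_⟩, hp.1.1 hp.2, Finset.notMem_erase _ _⟩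
    rw [Finset.card_erase_of_mem hp.2, hp.1.2, Nat.add_sub_cancel]
  · refine ⟨⟨Finset.insert_subset hp.2.1 hp.1.1, ?_⟩, Finset.mem_insert_self _ _⟩
    rw [Finset.card_insert_of_notMem hp.2.2, hp.1.2]
  · rw [Finset.insert_erase hp.2]
  · rw [Finset.erase_insert hp.2.2]

theorem sum_powersetCard_succ_insert {M : Type*} [AddCommMonoid M] {U : Finset σ} {k : σ}
    (hk : k ∉ U) (m : ℕ) (f : Finset σ → M) :
    ∑ J ∈ (insert k U).powersetCard (m + 1), f J =
      ∑ J ∈ U.powersetCard (m + 1), f J + ∑ J ∈ U.powersetCard m, f (insert k J) := by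
  have hkJ {m : ℕ} {J : Finset σ} (hJ : J ∈ U.powersetCard m) : k ∉ J :=
    fun h => hk ((Finset.mem_powersetCard.1 hJ).1 h)
  rw [Finset.powersetCard_succ_insert hk, Finset.sum_union, Finset.sum_image]
  · exact fun J hJ K hK => Finset.insert_erase_invOn.2.injOn (hkJ hJ) (hkJ hK)
  · rw [Finset.disjoint_left]
    intro J hJ hJ'
    obtain ⟨K, -, rfl⟩ := Finset.mem_image.1 hJ'
    exact hkJ hJ (Finset.mem_insert_self k K)

end AdjoinCentre

section ChainOp

variable {N : ℕ} {i k : Fin N} {J : Finset (Fin N)}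

/-- For `L = [i₁, …, i_r]`, the sum of all products of Bruhat operators `bruhatOp a b` with each
`b` in `J` used exactly once and the indices `a` running through `i_r, …, i₁` in this order,
repetitions and omissions being allowed. -/
noncomputable def chainOp :
    List (Fin N) → Finset (Fin N) → Matrix (Perm (Fin N)) (Perm (Fin N)) ℤ
  | [] => fun J => if J = ∅ then 1 else 0
  | i :: L => adjoinCentre (bruhatOp i) (chainOp L)

theorem chainOp_cons (i : Fin N) (L : List (Fin N)) (J : Finset (Fin N)) :
    chainOp (i :: L) J = chainOp L J + ∑ b ∈ J, chainOp (i :: L) (J.erase b) * bruhatOp i b :=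
  adjoinCentre_eq _ _ _

theorem chainOp_empty (L : List (Fin N)) : chainOp L ∅ = 1 := by
  induction L with
  | nil => simp only [chainOp, if_true]
  | cons i L ih => rw [chainOp_cons, Finset.sum_empty, add_zero, ih]

theorem chainOp_cons_cons_comm (L : List (Fin N)) (hik : i ≠ k) (hi : ∀ b ∈ J, i < b)
    (hk : ∀ b ∈ J, k < b) : chainOp (i :: k :: L) J = chainOp (k :: i :: L) J :=
  adjoinCentre_comm _ _ _ _ fun b hb c hc hbc =>
    bruhatOp_commute (hi b hb) (hk c hc) hik (hi c hc).ne (hk b hb).ne' hbc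

theorem sum_chainOp_cons_cons_mul_bruhatOp (L : List (Fin N)) (hik : i ≠ k) (hi : ∀ b ∈ J, i < b)
    (hk : ∀ b ∈ J, k < b) :
    ∑ b ∈ J, chainOp (k :: i :: L) (J.erase b) * bruhatOp i b =
      chainOp (k :: i :: L) J - chainOp (k :: L) J := by
  rw [← chainOp_cons_cons_comm L hik hi hk, chainOp_cons i, add_sub_cancel_left]
  refine Finset.sum_congr rfl fun b _ => ?_
  rw [chainOp_cons_cons_comm L hik (fun c hc => hi c (Finset.mem_of_mem_erase hc))
    fun c hc => hk c (Finset.mem_of_mem_erase hc)]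

theorem lt_of_chainOp_singleton_ne_zero (hk : ∀ b ∈ J, k < b) {w u : Perm (Fin N)}
    (h : chainOp [k] J w u ≠ 0) {c : Fin N} (hc : c ∈ J) : u c < u k := by
  induction J using Finset.strongInduction generalizing u with
  | H J ih =>
    have hempty : chainOp [] J = (0 : Matrix (Perm (Fin N)) (Perm (Fin N)) ℤ) :=
      if_neg (Finset.ne_empty_of_mem hc)
    rw [chainOp_cons, hempty, zero_add, Matrix.sum_apply] at h
    obtain ⟨b, hb, hne⟩ := Finset.exists_ne_zero_of_sum_ne_zero h
    rw [mul_bruhatOp_apply, ite_ne_right_iff] at hne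
    obtain ⟨hlen, hne⟩ := hne
    have hub : u b < u k := by
      simpa using ((len_mul_swap_add_one_eq_iff u (hk b hb)).1 hlen).1
    rcases eq_or_ne c b with rfl | hcb
    · exact hub
    · have hlt := ih _ (Finset.erase_ssubset hb) (fun d hd => hk d (Finset.mem_of_mem_erase hd)) hne
        (Finset.mem_erase.2 ⟨hcb, hc⟩)
      rw [Perm.mul_apply, Perm.mul_apply, swap_apply_left,
        swap_apply_of_ne_of_ne (hk c hc).ne' hcb] at hlt
      exact hlt.trans hub

theorem chainOp_singleton_mul_bruhatOp (hk : ∀ b ∈ J, k < b) {c : Fin N} (hc : c ∈ J) :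
    chainOp [k] J * bruhatOp k c = 0 := by
  ext w u
  rw [mul_bruhatOp_apply, Matrix.zero_apply, ite_eq_right_iff]
  intro hlen
  by_contra hne
  exact (lt_of_chainOp_singleton_ne_zero hk hne hc).asymm
    ((len_mul_swap_add_one_eq_iff u (hk c hc)).1 hlen).1

theorem commute_sum_bruhatOp_left {b : Fin N} {L : List (Fin N)} (hL : ∀ a ∈ L, a < k) (hiL : i ∉ L)
    (hik : i < k) (hkb : k < b) :
    Commute (L.map fun a => bruhatOp a k).sum (bruhatOp i b) := by
  refine Commute.list_sum_left _ _ fun x hx => ?_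
  obtain ⟨a, ha, rfl⟩ := List.mem_map.1 hx
  exact bruhatOp_commute (hL a ha) (hik.trans hkb) (ne_of_mem_of_not_mem ha hiL)
    ((hL a ha).trans hkb).ne hik.ne' hkb.ne

theorem commute_sum_bruhatOp_right {b : Fin N} (hJ : ∀ c ∈ J, k < c) (hik : i < k) (hkb : k < b) :
    Commute (∑ c ∈ J.erase b, bruhatOp k c) (bruhatOp i b) := by
  refine Commute.sum_left _ _ _ fun c hc => ?_
  obtain ⟨hcb, hc⟩ := Finset.mem_erase.1 hc
  exact bruhatOp_commute (hJ c hc) (hik.trans hkb) hik.ne' hkb.ne (hik.trans (hJ c hc)).ne' hcb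

theorem mul_bruhatOp_of_commute {b : Fin N} (hik : i < k) (hkb : k < b)
    {S T : Matrix (Perm (Fin N)) (Perm (Fin N)) ℤ} (hS : Commute S (bruhatOp i b))
    (hT : Commute T (bruhatOp i b)) :
    (bruhatOp i k + S - T) * bruhatOp i b =
      bruhatOp i b * (S - (bruhatOp k b + T)) + bruhatOp k b * bruhatOp i k := by
  rw [bruhatOp_mul_bruhatOp_eq_add hik hkb, sub_mul, add_mul, hS.eq, hT.eq]
  noncomm_ring

theorem chainOp_insert {L : List (Fin N)} (hL : ∀ a ∈ L, a < k) (hnd : L.Nodup)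
    (hJ : ∀ b ∈ J, k < b) :
    chainOp L (insert k J) =
      chainOp (k :: L) J * ((L.map fun a => bruhatOp a k).sum - ∑ c ∈ J, bruhatOp k c) := by
  induction L generalizing J with
  | nil =>
    have hempty : chainOp [] (insert k J) = (0 : Matrix (Perm (Fin N)) (Perm (Fin N)) ℤ) :=
      if_neg (Finset.insert_ne_empty k J)
    rw [hempty, List.map_nil, List.sum_nil, zero_sub, mul_neg, Finset.mul_sum,
      Finset.sum_eq_zero fun c hc => chainOp_singleton_mul_bruhatOp hJ hc, neg_zero]
  | cons i L ihL =>
    obtain ⟨hik, hL⟩ := List.forall_mem_cons.1 hL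
    obtain ⟨hiL, hnd⟩ := List.nodup_cons.1 hnd
    induction J using Finset.strongInduction with
    | H J ihJ =>
      have hkJ : k ∉ J := fun h => (hJ k h).false
      have hiJ (b : Fin N) (hb : b ∈ J) : i < b := hik.trans (hJ b hb)
      set S := (L.map fun a => bruhatOp a k).sum
      set Z := ∑ c ∈ J, bruhatOp k c
      have hterm (b : Fin N) (hb : b ∈ J) :
          chainOp (i :: L) ((insert k J).erase b) * bruhatOp i b =
            chainOp (k :: i :: L) (J.erase b) * bruhatOp i b * (S - Z) +
              chainOp (k :: i :: L) (J.erase b) * bruhatOp k b * bruhatOp i k := by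
        have hkb := hJ b hb
        rw [Finset.erase_insert_of_ne hkb.ne,
          ihJ _ (Finset.erase_ssubset hb) fun c hc => hJ c (Finset.mem_of_mem_erase hc),
          List.map_cons, List.sum_cons, mul_assoc,
          mul_bruhatOp_of_commute hik hkb (commute_sum_bruhatOp_left hL hiL hik hkb)
            (commute_sum_bruhatOp_right hJ hik hkb),
          Finset.add_sum_erase J _ hb, mul_add, mul_assoc, mul_assoc]
      have hk_sum : ∑ b ∈ J, chainOp (k :: i :: L) (J.erase b) * bruhatOp k b =
          chainOp (k :: i :: L) J - chainOp (i :: L) J := by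
        rw [chainOp_cons k (i :: L) J, add_sub_cancel_left]
      rw [chainOp_cons, Finset.sum_insert hkJ, Finset.erase_insert hkJ, ihL hL hnd hJ,
        Finset.sum_congr rfl hterm, Finset.sum_add_distrib, ← Finset.sum_mul, ← Finset.sum_mul,
        sum_chainOp_cons_cons_mul_bruhatOp L hik.ne hiJ hJ, hk_sum, List.map_cons, List.sum_cons]
      noncomm_ring

end ChainOp

/-! ### The Pieri operators -/

section PieriOp

variable {N : ℕ}

/-- The matrix by which multiplication by `x_k` acts in the Schubert basis (Monk's rule). -/
noncomputable def dunkl (k : Fin N) : Matrix (Perm (Fin N)) (Perm (Fin N)) ℤ :=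
  ∑ b, orderSign k b • bruhatOp k b

theorem dunkl_eq_sub (k : Fin N) :
    dunkl k = ∑ c ∈ Finset.Ioi k, bruhatOp k c - ∑ a ∈ Finset.Iio k, bruhatOp a k := by
  rw [dunkl, ← Finset.sum_add_sum_compl (Finset.Ioi k), sub_eq_add_neg, ← Finset.sum_neg_distrib]
  congr 1
  · refine Finset.sum_congr rfl fun c hc => ?_
    rw [orderSign_of_lt (Finset.mem_Ioi.1 hc), one_smul]
  · refine (Finset.sum_subset_zero_on_sdiff (fun a ha => ?_) (fun b hb => ?_) fun a ha => ?_).symm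
    · simpa using (Finset.mem_Iio.1 ha).le
    · obtain rfl : b = k := by simpa [le_antisymm_iff] using hb
      rw [orderSign_self, zero_smul]
    · rw [orderSign_of_gt (Finset.mem_Iio.1 ha), neg_one_smul, bruhatOp_swap]

/-- The positions `1, …, k`, which serve as the left ends of the steps in the `k`-Bruhat order. -/
def centres (N k : ℕ) : Finset (Fin N) := Finset.univ.filter fun a => a.val < k

theorem mem_centres {k : ℕ} {a : Fin N} : a ∈ centres N k ↔ a.val < k := by simp [centres]

theorem centres_val (k : Fin N) : centres N k = Finset.Iio k := by
  ext a
  simp [mem_centres]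

theorem centres_val_succ (k : Fin N) : centres N (k + 1) = insert k (Finset.Iio k) := by
  ext a
  rw [mem_centres, Finset.mem_insert, Finset.mem_Iio]
  lia

theorem compl_centres_val_succ (k : Fin N) : (centres N (k + 1))ᶜ = Finset.Ioi k := by
  ext a
  simp [mem_centres]

theorem compl_centres_val (k : Fin N) : (centres N k)ᶜ = insert k (Finset.Ioi k) := by
  rw [Finset.Ioi_insert]
  ext a
  simp [mem_centres]

/-- The sum of the operators along the chains with `m` distinct leaves that define
`w →_{r[k,m]} w'`, the steps being ordered by increasing centre. -/
noncomputable def pieriOp (N k m : ℕ) : Matrix (Perm (Fin N)) (Perm (Fin N)) ℤ :=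
  ∑ J ∈ (centres N k)ᶜ.powersetCard m, chainOp ((centres N k).sort (· ≥ ·)) J

theorem pieriOp_zero (k : ℕ) : pieriOp N k 0 = 1 := by
  rw [pieriOp, Finset.powersetCard_zero, Finset.sum_singleton, chainOp_empty]

theorem pieriOp_self_succ (m : ℕ) : pieriOp N N (m + 1) = 0 := by
  have hempty : (centres N N)ᶜ = ∅ := by
    ext a
    simp [mem_centres]
  rw [pieriOp, hempty, Finset.powersetCard_eq_empty.2 m.succ_pos, Finset.sum_empty]

theorem pieriOp_succ (k : Fin N) (m : ℕ) :
    pieriOp N k (m + 1) = pieriOp N (k + 1) (m + 1) - pieriOp N (k + 1) m * dunkl k := by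
  have hkIio : k ∉ Finset.Iio k := fun h => (Finset.mem_Iio.1 h).false
  have hsort : (centres N (k + 1)).sort (· ≥ ·) = k :: (Finset.Iio k).sort (· ≥ ·) := by
    rw [centres_val_succ, Finset.sort_insert _ (fun b hb => ge_iff_le.2 (Finset.mem_Iio.1 hb).le)
      hkIio]
  have hsum : (((Finset.Iio k).sort (· ≥ ·)).map fun a => bruhatOp a k).sum =
      ∑ a ∈ Finset.Iio k, bruhatOp a k := by
    rw [← List.sum_toFinset _ (Finset.sort_nodup _ _), Finset.sort_toFinset]
  simp only [pieriOp, hsort, compl_centres_val_succ, compl_centres_val]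
  rw [centres_val]
  set L := (Finset.Iio k).sort (· ≥ ·)
  set U := Finset.Ioi k
  have hkU : k ∉ U := fun h => (Finset.mem_Ioi.1 h).false
  have hwithout : ∑ J ∈ U.powersetCard (m + 1), chainOp L J =
      ∑ J ∈ U.powersetCard (m + 1), chainOp (k :: L) J -
        ∑ J ∈ U.powersetCard m, ∑ c ∈ U \ J, chainOp (k :: L) J * bruhatOp k c := by
    rw [← sum_powersetCard_succ_sum_erase, ← Finset.sum_sub_distrib]
    exact Finset.sum_congr rfl fun J _ => by rw [chainOp_cons k L J, add_sub_cancel_right]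
  have hwith (J : Finset (Fin N)) (hJ : J ∈ U.powersetCard m) : chainOp L (insert k J) =
      ∑ c ∈ U \ J, chainOp (k :: L) J * bruhatOp k c - chainOp (k :: L) J * dunkl k := by
    have hJU : J ⊆ U := (Finset.mem_powersetCard.1 hJ).1
    rw [chainOp_insert (fun a ha => Finset.mem_Iio.1 ((Finset.mem_sort _).1 ha))
      (Finset.sort_nodup _ _) (fun b hb => Finset.mem_Ioi.1 (hJU hb)), hsum, ← Finset.mul_sum,
      dunkl_eq_sub, ← mul_sub, ← Finset.sum_sdiff hJU]
    congr 1
    abel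
  rw [sum_powersetCard_succ_insert hkU, hwithout, Finset.sum_congr rfl hwith,
    Finset.sum_sub_distrib, Finset.sum_mul]
  abel

end PieriOp

section Representation

variable {N : ℕ} [NeZero N]

/-- The row vector of coordinates of the class of a polynomial in the Schubert basis. -/
noncomputable def schubertCoords : MvPolynomial (Fin N) ℤ →+ (Perm (Fin N) → ℤ) :=
  AddMonoidHom.pi schubertFunctional

theorem schubertCoords_apply (f : MvPolynomial (Fin N) ℤ) (u : Perm (Fin N)) :
    schubertCoords f u = schubertFunctional u f := rfl

theorem schubertCoords_one :
    schubertCoords (1 : MvPolynomial (Fin N) ℤ) = Pi.single 1 1 := by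
  ext u
  rw [schubertCoords_apply, schubertFunctional_one, Pi.single_apply]

theorem schubertCoords_schubertPoly (w : Perm (Fin N)) :
    schubertCoords (schubertPoly N w) = Pi.single w 1 := by
  ext u
  rw [schubertCoords_apply, isDualTo_schubertPoly, Pi.single_apply]

theorem schubertCoords_eq_of_mk_eq_sum {f : MvPolynomial (Fin N) ℤ} {c : Perm (Fin N) → ℤ}
    (h : Ideal.Quotient.mk (symIdeal N) f = ∑ u, c u • SS N u) : schubertCoords f = c := by
  have hmem : f - ∑ u, c u • schubertPoly N u ∈ symIdeal N := by
    rw [← Ideal.Quotient.eq, h, map_sum]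
    simp only [map_zsmul, SS]
  ext v
  rw [schubertCoords_apply]
  have hv := schubertFunctional_eq_zero_of_mem_symIdeal v hmem
  rw [map_sub, sub_eq_zero, map_sum] at hv
  simpa only [map_zsmul, isDualTo_schubertPoly _ v, smul_eq_mul, mul_ite, mul_one,
    mul_zero, Finset.sum_ite_eq, Finset.mem_univ, if_true] using hv

/-- The matrix `A` describes, in the Schubert basis, multiplication by the class of `g`. -/
def RepresentsMul (g : MvPolynomial (Fin N) ℤ) (A : Matrix (Perm (Fin N)) (Perm (Fin N)) ℤ) :
    Prop :=
  ∀ f, schubertCoords (f * g) = Matrix.vecMul (schubertCoords f) A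

variable {g h : MvPolynomial (Fin N) ℤ} {A B : Matrix (Perm (Fin N)) (Perm (Fin N)) ℤ}

theorem representsMul_zero :
    RepresentsMul (0 : MvPolynomial (Fin N) ℤ) 0 := fun f => by
  rw [mul_zero, map_zero, Matrix.vecMul_zero]

theorem representsMul_one : RepresentsMul (1 : MvPolynomial (Fin N) ℤ) 1 := fun f => by
  rw [mul_one, Matrix.vecMul_one]

theorem RepresentsMul.add (hg : RepresentsMul g A) (hh : RepresentsMul h B) :
    RepresentsMul (g + h) (A + B) := fun f => by
  rw [mul_add, map_add, hg, hh, Matrix.vecMul_add]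

theorem RepresentsMul.sub (hg : RepresentsMul g A) (hh : RepresentsMul h B) :
    RepresentsMul (g - h) (A - B) := fun f => by
  rw [mul_sub, map_sub, hg, hh, Matrix.vecMul_sub]

theorem RepresentsMul.mul (hg : RepresentsMul g A) (hh : RepresentsMul h B) :
    RepresentsMul (g * h) (A * B) := fun f => by
  rw [← mul_assoc, hh, hg, Matrix.vecMul_vecMul]

theorem representsMul_X (k : Fin N) : RepresentsMul (X k) (dunkl k) := fun f => by
  ext u
  rw [mul_comm, schubertCoords_apply, schubertFunctional_X_mul, dunkl, Matrix.vecMul_sum,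
    Finset.sum_apply]
  refine Finset.sum_congr rfl fun b _ => ?_
  rw [Matrix.vecMul_smul, Pi.smul_apply, smul_eq_mul, vecMul_bruhatOp_apply]
  simp only [schubertCoords_apply]

theorem representsMul_C (a : ℤ) :
    RepresentsMul (C a : MvPolynomial (Fin N) ℤ) (a • 1) := fun f => by
  rw [mul_comm, C_mul', map_zsmul, Matrix.vecMul_smul, Matrix.vecMul_one]

theorem exists_representsMul (g : MvPolynomial (Fin N) ℤ) : ∃ A, RepresentsMul g A := by
  induction g using MvPolynomial.induction_on with
  | C a => exact ⟨_, representsMul_C a⟩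
  | add p q hp hq =>
    obtain ⟨A, hA⟩ := hp
    obtain ⟨B, hB⟩ := hq
    exact ⟨_, hA.add hB⟩
  | mul_X p i hp =>
    obtain ⟨A, hA⟩ := hp
    exact ⟨_, hA.mul (representsMul_X i)⟩

-- The polynomial is `h_m(x₁, …, x_k)`: the recursion is
-- `h_{m+1}(x₁, …, x_k) = h_{m+1}(x₁, …, x_{k+1}) - x_{k+1} h_m(x₁, …, x_{k+1})`, and
-- `h_m(x₁, …, x_N)` vanishes modulo `symIdeal N` for `m > 0`.
theorem exists_representsMul_pieriOp {k : ℕ} (hk : k ≤ N) (m : ℕ) :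
    ∃ g : MvPolynomial (Fin N) ℤ, RepresentsMul g (pieriOp N k m) := by
  induction hk using Nat.decreasingInduction generalizing m with
  | self =>
    cases m with
    | zero => exact ⟨1, by simpa only [pieriOp_zero] using representsMul_one⟩
    | succ m => exact ⟨0, by simpa only [pieriOp_self_succ] using representsMul_zero⟩
  | of_succ k hk ih =>
    cases m with
    | zero => exact ⟨1, by simpa only [pieriOp_zero] using representsMul_one⟩
    | succ m =>
      obtain ⟨g, hg⟩ := ih (m + 1)
      obtain ⟨h, hh⟩ := ih m
      exact ⟨g - h * X ⟨k, hk⟩, by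
        simpa only [pieriOp_succ ⟨k, hk⟩] using hg.sub (hh.mul (representsMul_X ⟨k, hk⟩))⟩

theorem schubertCoords_mul_congr (f : MvPolynomial (Fin N) ℤ)
    (hgh : schubertCoords g = schubertCoords h) :
    schubertCoords (f * g) = schubertCoords (f * h) := by
  obtain ⟨A, hA⟩ := exists_representsMul f
  rw [mul_comm, hA, hgh, ← hA, mul_comm]

theorem RepresentsMul.schubertCoords_schubertPoly_mul {r : Perm (Fin N)} (hg : RepresentsMul g A)
    (hr : A 1 = Pi.single r 1) (w : Perm (Fin N)) :
    schubertCoords (schubertPoly N w * schubertPoly N r) = A w := by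
  have hgr : schubertCoords (schubertPoly N r) = schubertCoords g := by
    rw [schubertCoords_schubertPoly, ← hr, ← one_mul g, hg, schubertCoords_one,
      Matrix.single_one_vecMul, Matrix.row]
  rw [schubertCoords_mul_congr _ hgr, hg, schubertCoords_schubertPoly, Matrix.single_one_vecMul,
    Matrix.row]

end Representation

/-! ### Pieri chains -/

section PieriChain

variable {N : ℕ}

/-- `PieriChain C w J u` says that `u` is obtained from `w` by successive right multiplications by
transpositions `t_{a,b}` that each raise the length by one, where every `a` lies in `C` and the `b`
are distinct and form the set `J`. -/
inductive PieriChain (C : Finset (Fin N)) (w : Perm (Fin N)) :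
    Finset (Fin N) → Perm (Fin N) → Prop
  | nil : PieriChain C w ∅ w
  | snoc {J : Finset (Fin N)} {u : Perm (Fin N)} {a b : Fin N} (chain : PieriChain C w J u)
      (ha : a ∈ C) (hb : b ∉ J) (hlen : len (u * swap a b) = len u + 1) :
      PieriChain C w (insert b J) (u * swap a b)

variable {C D J K : Finset (Fin N)} {w u : Perm (Fin N)} {i p : Fin N}

theorem PieriChain.mono (hCD : C ⊆ D) (h : PieriChain C w J u) : PieriChain D w J u := by
  induction h with
  | nil => exact nil
  | snoc _ ha hb hlen ih => exact ih.snoc (hCD ha) hb hlen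

theorem PieriChain.apply_eq (h : PieriChain C w J u) (hpC : p ∉ C) (hpJ : p ∉ J) : u p = w p := by
  induction h with
  | nil => rfl
  | snoc _ ha _ _ ih =>
    rw [Finset.mem_insert, not_or] at hpJ
    rw [Perm.mul_apply, swap_apply_of_ne_of_ne (ne_of_mem_of_not_mem ha hpC).symm hpJ.1, ih hpJ.2]

theorem PieriChain.apply_lt (h : PieriChain C w J u) (hCJ : ∀ a ∈ C, ∀ b ∈ J, a < b) (hp : p ∈ J) :
    u p < w p := by
  induction h with
  | nil => exact absurd hp (Finset.notMem_empty p)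
  | @snoc J u a b hchain ha hb hlen ih =>
    simp only [Finset.forall_mem_insert] at hCJ
    obtain ⟨hab, haJ⟩ := hCJ a ha
    have hcover := (len_mul_swap_eq_add_one_iff u hab).1 hlen
    rcases eq_or_ne p b with rfl | hpb
    · rw [Perm.mul_apply, swap_apply_right,
        ← hchain.apply_eq (fun hpC => (hCJ p hpC).1.false) hb]
      exact hcover.1
    · have hpJ := Finset.mem_of_mem_insert_of_ne hp hpb
      rw [Perm.mul_apply, swap_apply_of_ne_of_ne (haJ p hpJ).ne' hpb]
      exact ih (fun c hc => (hCJ c hc).2) hpJ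

theorem PieriChain.mem_leaves_iff (h : PieriChain C w J u) (hCJ : ∀ a ∈ C, ∀ b ∈ J, a < b)
    (hp : p ∉ C) : p ∈ J ↔ u p < w p :=
  ⟨h.apply_lt hCJ, fun hlt => by_contra fun hpJ => hlt.ne (h.apply_eq hp hpJ)⟩

theorem pieriChain_empty_iff : PieriChain ∅ w J u ↔ J = ∅ ∧ u = w := by
  refine ⟨fun h => ?_, ?_⟩
  · cases h with
    | nil => exact ⟨rfl, rfl⟩
    | snoc _ ha => exact absurd ha (Finset.notMem_empty _)
  · rintro ⟨rfl, rfl⟩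
    exact .nil

theorem len_mul_swap_exchange {a b c : Fin N} (hab : a < b) (hic : i < c) (hai : a ≠ i)
    (hac : a ≠ c) (hbi : b ≠ i) (hbc : b ≠ c) (hb : len (u * swap a b) = len u + 1)
    (hc : len (u * swap i c) + 1 = len u) :
    len (u * swap i c * swap a b) = len (u * swap i c) + 1 := by
  have hswap : u * swap i c * swap a b * swap i c = u * swap a b := by
    rw [mul_assoc (u * swap i c), swap_mul_swap_comm hab.ne hic.ne hai hac hbi hbc, ← mul_assoc,
      mul_swap_mul_self]
  have hrise_ab : len (u * swap i c) < len (u * swap i c * swap a b) := by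
    rw [len_lt_len_mul_swap_iff hab, Perm.mul_apply, Perm.mul_apply,
      swap_apply_of_ne_of_ne hai hac, swap_apply_of_ne_of_ne hbi hbc,
      ← len_lt_len_mul_swap_iff hab]
    lia
  have hrise_ic : len (u * swap i c * swap a b) < len (u * swap a b) := by
    rw [← hswap, len_lt_len_mul_swap_iff hic, Perm.mul_apply, Perm.mul_apply _ (swap a b) c,
      swap_apply_of_ne_of_ne hai.symm hbi.symm, swap_apply_of_ne_of_ne hac.symm hbc.symm,
      ← len_lt_len_mul_swap_iff hic, mul_swap_mul_self]
    lia
  lia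

theorem PieriChain.exists_last_step (h : PieriChain (insert i C) w J u)
    (hCJ : ∀ a ∈ insert i C, ∀ b ∈ J, a < b) :
    PieriChain C w J u ∨ ∃ b ∈ J, len (u * swap i b) + 1 = len u ∧
      PieriChain (insert i C) w (J.erase b) (u * swap i b) := by
  induction h with
  | nil => exact .inl .nil
  | @snoc J u a b hchain ha hb hlen ih =>
    simp only [Finset.forall_mem_insert b] at hCJ
    obtain ⟨hab, haJ⟩ := hCJ a ha
    rcases eq_or_ne a i with rfl | hai
    · refine .inr ⟨b, Finset.mem_insert_self b J, ?_, ?_⟩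
      · rw [mul_swap_mul_self, hlen]
      · rwa [mul_swap_mul_self, Finset.erase_insert hb]
    · rcases ih fun c hc => (hCJ c hc).2 with hC | ⟨c, hc, hlen', hchain'⟩
      · exact .inl (hC.snoc (Finset.mem_of_mem_insert_of_ne ha hai) hb hlen)
      · obtain ⟨hib, hiJ⟩ := hCJ i (Finset.mem_insert_self i C)
        have hcb : c ≠ b := ne_of_mem_of_not_mem hc hb
        have hexch := len_mul_swap_exchange hab (hiJ c hc) hai (haJ c hc).ne hib.ne' hcb.symm
          hlen hlen'
        have hcomm : u * swap a b * swap i c = u * swap i c * swap a b := by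
          rw [mul_assoc, swap_mul_swap_comm hab.ne (hiJ c hc).ne hai (haJ c hc).ne hib.ne' hcb.symm,
            mul_assoc]
        refine .inr ⟨c, Finset.mem_insert_of_mem hc, by rw [hcomm]; lia, ?_⟩
        rw [hcomm, Finset.erase_insert_of_ne hcb.symm]
        exact hchain'.snoc ha (fun h => hb (Finset.mem_of_mem_erase h)) hexch

theorem pieriChain_insert_iff (hCJ : ∀ a ∈ insert i C, ∀ b ∈ J, a < b) :
    PieriChain (insert i C) w J u ↔ PieriChain C w J u ∨ ∃ b ∈ J, len (u * swap i b) + 1 = len u ∧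
      PieriChain (insert i C) w (J.erase b) (u * swap i b) := by
  refine ⟨fun h => h.exists_last_step hCJ, ?_⟩
  rintro (h | ⟨b, hb, hlen, h⟩)
  · exact h.mono (Finset.subset_insert i C)
  · have hsnoc := h.snoc (Finset.mem_insert_self i C) (Finset.notMem_erase b J)
      (by rw [mul_swap_mul_self, hlen])
    rwa [Finset.insert_erase hb, mul_swap_mul_self] at hsnoc

theorem PieriChain.apply_root {b : Fin N} (h : PieriChain C w (J.erase b) (u * swap i b))
    (hb : b ∉ C) : u i = w b := by
  simpa only [Perm.mul_apply, swap_apply_right] using h.apply_eq hb (Finset.notMem_erase b J)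

theorem chainOp_apply {L : List (Fin N)} (hL : L.Nodup) (hLJ : ∀ a ∈ L, ∀ b ∈ J, a < b) :
    chainOp L J w u = if PieriChain L.toFinset w J u then 1 else 0 := by
  induction L generalizing J u with
  | nil =>
    simp only [List.toFinset_nil, pieriChain_empty_iff, chainOp]
    split_ifs <;> simp_all [Matrix.one_apply, eq_comm]
  | cons i L ihL =>
    obtain ⟨hiL, hL⟩ := List.nodup_cons.1 hL
    induction J using Finset.strongInduction generalizing u with
    | H J ihJ =>
      have hterm (b : Fin N) (hb : b ∈ J) : (chainOp (i :: L) (J.erase b) * bruhatOp i b) w u =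
          if len (u * swap i b) + 1 = len u ∧
            PieriChain (insert i L.toFinset) w (J.erase b) (u * swap i b) then 1 else 0 := by
        rw [mul_bruhatOp_apply, ite_and, ihJ _ (Finset.erase_ssubset hb), List.toFinset_cons]
        exact fun a ha c hc => hLJ a ha c (Finset.mem_of_mem_erase hc)
      obtain ⟨hiJ, hLJ'⟩ := List.forall_mem_cons.1 hLJ
      simp only [← List.mem_toFinset, List.toFinset_cons] at hLJ
      have hroot {b : Fin N} (hb : b ∈ J)
          (h : PieriChain (insert i L.toFinset) w (J.erase b) (u * swap i b)) : u i = w b :=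
        h.apply_root fun hbL => (hLJ b hbL b hb).false
      rw [chainOp_cons, Matrix.add_apply, Matrix.sum_apply, ihL hL hLJ',
        Finset.sum_congr rfl hterm, Finset.sum_ite_zero, List.toFinset_cons,
        if_congr (pieriChain_insert_iff hLJ) rfl rfl]
      · by_cases h : PieriChain L.toFinset w J u
        · have hi := h.apply_eq (mt List.mem_toFinset.1 hiL) fun hi => (hiJ i hi).false
          rw [if_pos h, if_pos (Or.inl h), if_neg, add_zero]
          rintro ⟨b, hb, -, hb'⟩
          exact (hiJ b hb).ne (w.injective (hi.symm.trans (hroot hb hb')))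
        · rw [if_neg h, zero_add]
          congr 1
          exact propext (or_iff_right h).symm
      · rintro b hb c hc ⟨-, hb'⟩ ⟨-, hc'⟩
        exact w.injective ((hroot hb hb').symm.trans (hroot hc hc'))

theorem pieriOp_apply (k m : ℕ) : pieriOp N k m w u =
    if ∃ J ∈ (centres N k)ᶜ.powersetCard m, PieriChain (centres N k) w J u then 1 else 0 := by
  have hlt {J : Finset (Fin N)} (hJ : J ∈ (centres N k)ᶜ.powersetCard m) (a : Fin N)
      (ha : a ∈ centres N k) (b : Fin N) (hb : b ∈ J) : a < b := by
    have hbk := (Finset.mem_powersetCard.1 hJ).1 hb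
    rw [Finset.mem_compl, mem_centres] at hbk
    rw [mem_centres] at ha
    lia
  rw [pieriOp, Matrix.sum_apply, ← Finset.sum_ite_zero]
  · refine Finset.sum_congr rfl fun J hJ => ?_
    rw [chainOp_apply (Finset.sort_nodup _ _) fun a ha => hlt hJ a ((Finset.mem_sort _).1 ha),
      Finset.sort_toFinset]
  · intro J hJ K hK hchainJ hchainK
    ext p
    by_cases hp : p ∈ centres N k
    · exact iff_of_false (fun hpJ => (hlt hJ p hp p hpJ).false) fun hpK => (hlt hK p hp p hpK).false
    · rw [hchainJ.mem_leaves_iff (hlt hJ) hp, hchainK.mem_leaves_iff (hlt hK) hp]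

end PieriChain

/-! ### The relation `→_{r[k,m]}` -/

section RelR

variable {N k m : ℕ} [NeZero N] {w u : Perm (Fin N)} {a b : ℕ → ℕ}

theorem pos_val {j : ℕ} (hj : 1 ≤ j) (hjN : j ≤ N) : (pos N j).val + 1 = j := by
  simp only [pos, Nat.mod_eq_of_lt (show j - 1 < N by lia), Nat.sub_add_cancel hj]

theorem tProd_succ (a b : ℕ → ℕ) (i : ℕ) :
    tProd N a b (i + 1) = tProd N a b i * t N (a i) (b i) := by
  simp only [tProd, List.range_succ, List.map_append, List.map_singleton, List.prod_append,
    List.prod_singleton]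

theorem tProd_update {i : ℕ} (hi : i ≤ m) (p q : ℕ) :
    tProd N (Function.update a m p) (Function.update b m q) i = tProd N a b i := by
  refine congrArg List.prod (List.map_congr_left fun j hj => ?_)
  have hjm : j ≠ m := ((List.mem_range.1 hj).trans_le hi).ne
  rw [Function.update_of_ne hjm, Function.update_of_ne hjm]

theorem tProd_update_succ (p q : Fin N) :
    tProd N (Function.update a m (p + 1)) (Function.update b m (q + 1)) (m + 1) =
      tProd N a b m * swap p q := by
  rw [tProd_succ, tProd_update le_rfl, Function.update_self, Function.update_self, t,
    pos_val_add_one, pos_val_add_one]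

theorem StepOK.mono {i : ℕ} (h : StepOK N k m w a b) (hi : i ≤ m) : StepOK N k i w a b :=
  ⟨fun j hj => h.1 j (hj.trans_le hi), fun j hj => h.2 j (hj.trans hi)⟩

theorem StepOK.pos_left_val {i : ℕ} (h : StepOK N k m w a b) (hi : i < m) :
    (pos N (a i)).val + 1 = a i := by
  obtain ⟨ha, hak, hkb, hbN⟩ := h.1 i hi
  exact pos_val ha (by lia)

theorem StepOK.pos_right_val {i : ℕ} (h : StepOK N k m w a b) (hi : i < m) :
    (pos N (b i)).val + 1 = b i := by
  obtain ⟨-, -, hkb, hbN⟩ := h.1 i hi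
  exact pos_val (by lia) hbN

theorem StepOK.injOn_pos (h : StepOK N k m w a b) (hb : Set.InjOn b (Finset.range m)) :
    Set.InjOn (fun i => pos N (b i)) (Finset.range m) := by
  intro i hi j hj hij
  have hval := congrArg (fun p : Fin N => p.val + 1) hij
  simp only [h.pos_right_val (Finset.mem_range.1 hi),
    h.pos_right_val (Finset.mem_range.1 hj)] at hval
  exact hb hi hj hval

theorem StepOK.pieriChain (h : StepOK N k m w a b) (hb : Set.InjOn b (Finset.range m)) :
    PieriChain (centres N k) w ((Finset.range m).image fun i => pos N (b i))
      (w * tProd N a b m) := by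
  induction m with
  | zero => exact .nil
  | succ m ih =>
    have hsub : (Finset.range m : Set ℕ) ⊆ Finset.range (m + 1) :=
      Finset.coe_subset.2 (Finset.range_subset_range.2 m.le_succ)
    rw [tProd_succ, ← mul_assoc, Finset.range_add_one, Finset.image_insert]
    refine (ih (h.mono m.le_succ) (hb.mono hsub)).snoc ?_ ?_ ?_
    · have hak := (h.1 m m.lt_succ_self).2.1
      have hpos := h.pos_left_val m.lt_succ_self
      rw [mem_centres]
      lia
    · rw [Finset.mem_image]
      rintro ⟨i, hi, him⟩
      exact (Finset.mem_range.1 hi).ne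
        (h.injOn_pos hb (hsub hi) (Finset.mem_coe.2 (Finset.self_mem_range_succ m)) him)
    · have hlen := h.2 (m + 1) le_rfl
      rw [tProd_succ, ← mul_assoc] at hlen
      exact hlen.trans (congrArg (· + 1) (h.2 m m.le_succ).symm)

theorem StepOK.update (h : StepOK N k m w a b) {p q : Fin N} (hp : p.val < k) (hq : k ≤ q.val)
    (hlen : len (w * tProd N a b m * swap p q) = len (w * tProd N a b m) + 1) :
    StepOK N k (m + 1) w (Function.update a m (p + 1)) (Function.update b m (q + 1)) := by
  refine ⟨fun i hi => ?_, fun i hi => ?_⟩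
  · rcases Nat.lt_succ_iff_lt_or_eq.1 hi with hi | rfl
    · rw [Function.update_of_ne hi.ne, Function.update_of_ne hi.ne]
      exact h.1 i hi
    · rw [Function.update_self, Function.update_self]
      exact ⟨by lia, hp, by lia, q.isLt⟩
  · rcases Nat.le_succ_iff.1 hi with hi | rfl
    · rw [tProd_update hi, h.2 i hi]
    · rw [tProd_update_succ, ← mul_assoc, hlen, h.2 m le_rfl, add_assoc]

theorem PieriChain.exists_stepOK {J : Finset (Fin N)} (h : PieriChain (centres N k) w J u)
    (hJ : J ⊆ (centres N k)ᶜ) :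
    ∃ a b, StepOK N k J.card w a b ∧ u = w * tProd N a b J.card ∧
      ((Finset.range J.card).image fun i => pos N (b i)) = J := by
  induction h with
  | nil => exact ⟨0, 0, ⟨by simp, by simp [tProd]⟩, by simp [tProd], rfl⟩
  | @snoc J u p q _ hp hq hlen ih =>
    rw [Finset.insert_subset_iff, Finset.mem_compl] at hJ
    rw [mem_centres] at hp hJ
    obtain ⟨a, b, hab, rfl, himage⟩ := ih hJ.2
    rw [Finset.card_insert_of_notMem hq]
    refine ⟨_, _, hab.update hp (not_lt.1 hJ.1) hlen, ?_, ?_⟩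
    · rw [tProd_update_succ, mul_assoc]
    · rw [Finset.range_add_one, Finset.image_insert, Function.update_self, pos_val_add_one]
      refine congrArg (insert q) (.trans (Finset.image_congr fun i hi => ?_) himage)
      simp only [Function.update_of_ne (Finset.mem_range.1 (Finset.mem_coe.1 hi)).ne]

theorem relR_iff_exists_pieriChain : RelR N k m w u ↔
    ∃ J ∈ (centres N k)ᶜ.powersetCard m, PieriChain (centres N k) w J u := by
  constructor
  · rintro ⟨a, b, h, rfl, hb⟩
    have hinj : Set.InjOn b (Finset.range m) := fun i hi j hj => not_imp_not.1
      (hb i j (Finset.mem_range.1 hi) (Finset.mem_range.1 hj))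
    refine ⟨_, Finset.mem_powersetCard.2 ⟨Finset.image_subset_iff.2 fun i hi => ?_, ?_⟩,
      h.pieriChain hinj⟩
    · have hkb := (h.1 i (Finset.mem_range.1 hi)).2.2.1
      have hpos := h.pos_right_val (Finset.mem_range.1 hi)
      rw [Finset.mem_compl, mem_centres]
      lia
    · rw [Finset.card_image_of_injOn (h.injOn_pos hinj), Finset.card_range]
  · rintro ⟨J, hJ, h⟩
    obtain ⟨hJk, rfl⟩ := Finset.mem_powersetCard.1 hJ
    obtain ⟨a, b, hab, rfl, himage⟩ := h.exists_stepOK hJk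
    have hinj := Finset.card_image_iff.1 ((congrArg Finset.card himage).trans
      (Finset.card_range J.card).symm)
    exact ⟨a, b, hab, rfl, fun i j hi hj hij hb => hij (hinj (Finset.mem_coe.2
      (Finset.mem_range.2 hi)) (Finset.mem_coe.2 (Finset.mem_range.2 hj)) (congrArg _ hb))⟩

theorem pieriOp_apply_eq_ite_relR (k m : ℕ) (w u : Perm (Fin N)) :
    pieriOp N k m w u = if RelR N k m w u then 1 else 0 := by
  rw [pieriOp_apply, if_congr relR_iff_exists_pieriChain rfl rfl]

end RelR

/-! ### The row of the identity -/

section RPerm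

variable {N k : ℕ} [NeZero N]

theorem rPerm_succ (k j : ℕ) : rPerm N k (j + 1) = rPerm N k j * t N k (k + 1 + j) :=
  tProd_succ (fun _ => k) (fun i => k + 1 + i) j

theorem rPerm_apply {j : ℕ} (hk : 1 ≤ k) (hj : k + j ≤ N) (p : Fin N) :
    (rPerm N k j p).val =
      if p.val + 1 = k then p.val + j else if k ≤ p.val ∧ p.val < k + j then p.val - 1 else p := by
  induction j generalizing p with
  | zero =>
    have hone : rPerm N k 0 = 1 := rfl
    rw [hone, Perm.one_apply]
    lia
  | succ j ih =>
    have hleft : (pos N k).val + 1 = k := pos_val hk (by lia)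
    have hright : (pos N (k + 1 + j)).val + 1 = k + 1 + j := pos_val (by lia) (by lia)
    rw [rPerm_succ, Perm.mul_apply, t, ih (by lia), swap_apply_def]
    lia

theorem isBruhatCover_rPerm_iff {j : ℕ} (hk : 1 ≤ k) (hj : k + j ≤ N) {a b : Fin N}
    (ha : a.val < k) (hb : k + j ≤ b.val) :
    IsBruhatCover (rPerm N k j) a b ↔ a.val + 1 = k ∧ b.val = k + j := by
  have hval := rPerm_apply hk hj
  constructor
  · rintro ⟨-, hbetween⟩
    simp only [Set.mem_Ioo, Fin.lt_def, hval] at hbetween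
    constructor
    · have hpred := hbetween ⟨k - 1, by lia⟩
      lia
    · have hnext := hbetween ⟨k + j, by lia⟩
      lia
  · rintro ⟨hak, hbk⟩
    refine ⟨?_, fun i hi => ?_⟩
    · rw [Fin.lt_def, hval, hval]
      lia
    · simp only [Set.mem_Ioo, Fin.lt_def, hval] at hi ⊢
      lia

theorem relR_one_rPerm {m : ℕ} (hk : 1 ≤ k) (hkm : k + m ≤ N) : RelR N k m 1 (rPerm N k m) := by
  refine ⟨fun _ => k, fun i => k + 1 + i, ⟨fun i hi => by lia, fun i hi => ?_⟩,
    (one_mul _).symm, fun i j _ _ hij => by lia⟩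
  rw [one_mul]
  change len (rPerm N k i) = len (1 : Perm (Fin N)) + i
  induction i with
  | zero => rfl
  | succ i ih =>
    have hleft : (pos N k).val + 1 = k := pos_val hk (by lia)
    have hright : (pos N (k + 1 + i)).val + 1 = k + 1 + i := pos_val (by lia) (by lia)
    have hcover : IsBruhatCover (rPerm N k i) (pos N k) (pos N (k + 1 + i)) :=
      (isBruhatCover_rPerm_iff hk (by lia) (by lia) (by lia)).2 ⟨hleft, by lia⟩
    rw [rPerm_succ, t, (len_mul_swap_eq_add_one_iff _ (Fin.lt_def.2 (by lia))).2 hcover,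
      ih (by lia), add_assoc]

theorem PieriChain.eq_rPerm {J : Finset (Fin N)} {u : Perm (Fin N)} (hk : 1 ≤ k) (hkN : k ≤ N)
    (h : PieriChain (centres N k) 1 J u) (hJ : J ⊆ (centres N k)ᶜ) :
    k + J.card ≤ N ∧ u = rPerm N k J.card ∧
      ∀ x : Fin N, k ≤ x.val → x.val < k + J.card → x ∈ J := by
  induction h with
  | nil => exact ⟨hkN, rfl, fun x hx hx' => absurd hx hx'.not_ge⟩
  | @snoc J u a b _ ha hb hlen ih =>
    rw [Finset.insert_subset_iff, Finset.mem_compl, mem_centres] at hJ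
    rw [mem_centres] at ha
    obtain ⟨hcard, rfl, hmem⟩ := ih hJ.2
    have hJb : k + J.card ≤ b.val := by
      by_contra hlt
      exact hb (hmem b (not_lt.1 hJ.1) (not_le.1 hlt))
    have hcover := (len_mul_swap_eq_add_one_iff _ (Fin.lt_def.2 (by lia))).1 hlen
    obtain ⟨hak, hbk⟩ := (isBruhatCover_rPerm_iff hk hcard ha hJb).1 hcover
    rw [Finset.card_insert_of_notMem hb]
    refine ⟨by lia, ?_, fun x hx hx' => ?_⟩
    · rw [rPerm_succ, t, show k + 1 + J.card = b.val + 1 by lia, ← hak, pos_val_add_one,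
        pos_val_add_one]
    · rcases Nat.lt_or_ge x.val (k + J.card) with hlt | hge
      · exact Finset.mem_insert_of_mem (hmem x hx hlt)
      · exact Finset.mem_insert.2 (.inl (Fin.ext (by lia)))

theorem relR_one_iff {m : ℕ} {u : Perm (Fin N)} (hk : 1 ≤ k) (hkm : k + m ≤ N) :
    RelR N k m 1 u ↔ u = rPerm N k m := by
  refine ⟨fun h => ?_, fun h => h ▸ relR_one_rPerm hk hkm⟩
  obtain ⟨J, hJ, hchain⟩ := relR_iff_exists_pieriChain.1 h
  obtain ⟨hJk, rfl⟩ := Finset.mem_powersetCard.1 hJ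
  exact (hchain.eq_rPerm hk (by lia) hJk).2.1

theorem pieriOp_one {m : ℕ} (hk : 1 ≤ k) (hkm : k + m ≤ N) :
    pieriOp N k m 1 = Pi.single (rPerm N k m) 1 := by
  ext u
  rw [pieriOp_apply_eq_ite_relR, if_congr (relR_one_iff hk hkm) rfl rfl, Pi.single_apply]

end RPerm

/-- The structure constant `c^{w'}_{w, r[k,m]}` is `1` if `w →_{r[k,m]} w'` and `0`
otherwise.  The structure constants are encoded by their defining property:
any coefficient function `c` expressing `𝔖_w · 𝔖_{r[k,m]}` in the Schubert basis
of `Hₙ` satisfies the conclusion (here the paper's `n` is `n+1`). -/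
theorem structure_constant_rPerm (n k m : ℕ) (hk : 1 ≤ k) (hm : 1 ≤ m)
    (hkm : k + m ≤ n + 1) (w w' : Equiv.Perm (Fin (n + 1)))
    (c : Equiv.Perm (Fin (n + 1)) → ℤ)
    (hc : SS (n + 1) w * SS (n + 1) (rPerm (n + 1) k m) =
      ∑ u, c u • SS (n + 1) u) :
    c w' = if RelR (n + 1) k m w w' then 1 else 0 := by
  obtain ⟨g, hg⟩ := exists_representsMul_pieriOp (show k ≤ n + 1 by lia) m
  have hcoords :
      schubertCoords (schubertPoly (n + 1) w * schubertPoly (n + 1) (rPerm (n + 1) k m)) = c :=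
    schubertCoords_eq_of_mk_eq_sum ((map_mul _ _ _).trans hc)
  rw [← hcoords, hg.schubertCoords_schubertPoly_mul (pieriOp_one hk hkm),
    pieriOp_apply_eq_ite_relR]

end SchubertPieri
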